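/- arXiv:2102.13219 — 4 statements merged into one kernel-verified Lean document; each statement's English description precedes it below -/
import Mathlib

section
/- Let G_d ∈ {Cyc_d, Cyc2D_{d₁,d₂}} (with d = d₁·d₂ in the two-dimensional case) and A_d ∈ {S^{d−1}(√d), Q^d}. Then for any fixed integer k ≥ 1, dim V_{d,k}(G_d) = Θ_d(d^{k−1}); that is, there exist constants 0 < c ≤ C < ∞ (depending only on k) and d₀ such that c·d^{k−1} ≤ D(A_d;k) ≤ C·d^{k−1} for all admissible d ≥ d₀. -/
/-!
Both bounds hold for any finite abelian group `ι` acting on `ℝ^ι` by translating indices; `Fin d`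
and `Fin d₁ × Fin d₂` are the two instances needed. Write `d = |ι|`.

*Upper bound* `D ≤ d ^ (k - 1)`. After averaging over the group, each basis function is
represented by an invariant polynomial of degree at most `k`. Since translations act transitively
on the variables and `k ≥ 1`, every monomial of degree `k` can be translated to one divisible by
`X 0`, so the degree-`k` part of an invariant polynomial is determined by its coefficients at the
monomials `X 0 * X (f 1) * ⋯ * X (f (k - 1))`. A linear combination of the basis for which these
coefficients all vanish has degree `< k`, hence is orthogonal to the basis, hence is zero.

*Lower bound* `choose d k ≤ d * D`. On the sphere as on the cube, a squarefree monomial of degree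
`k` is orthogonal to all polynomials of degree `< k`, by a sign flip of a single coordinate. The
orbit sums of squarefree monomials therefore lie in `V_k(G)`. They are linearly independent already
on the cube `{-1,1}^ι`, which the sphere of radius `√d` contains, and there are at least
`choose d k / d` orbits of `k`-subsets. For `d ≥ 2k` this is at least `d ^ (k - 1) / (2 ^ k * k!)`.

In particular the uniqueness of the rotation-invariant measure on the sphere is not needed, only
its invariance under sign flips.
-/

open MeasureTheory ProbabilityTheory

/-- The uniform probability measure on the hypercube `{-1,1}^ι`. -/
noncomputable def cubeUniformI (ι : Type) [Fintype ι] : Measure (ι → ℝ) :=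
  Measure.pi fun _ => (2 : ENNReal)⁻¹ • (Measure.dirac (1 : ℝ) + Measure.dirac (-1 : ℝ))

/-- `μ` is the uniform probability measure on the sphere of radius `r` in `ℝ^ι`. -/
def IsUniformOnSphereI (ι : Type) [Fintype ι] (r : ℝ) (μ : Measure (ι → ℝ)) : Prop :=
  IsProbabilityMeasure μ ∧
  μ {x | ∑ i, x i ^ 2 ≠ r ^ 2} = 0 ∧
  ∀ T : (ι → ℝ) →ₗ[ℝ] (ι → ℝ),
    (∀ x y : ι → ℝ, ∑ i, T x i * T y i = ∑ i, x i * y i) →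
    Measure.map T μ = μ

/-- `A` is the sphere `S^{|ι|-1}(√|ι|)` or the hypercube `{-1,1}^ι`, with uniform
probability measure `μ`. -/
def IsUniformOnI (ι : Type) [Fintype ι] (A : Set (ι → ℝ)) (μ : Measure (ι → ℝ)) : Prop :=
  (A = {x | ∑ i, x i ^ 2 = (Fintype.card ι : ℝ)} ∧
    IsUniformOnSphereI ι (Real.sqrt (Fintype.card ι)) μ) ∨
  (A = {x | ∀ i, x i = 1 ∨ x i = -1} ∧ μ = cubeUniformI ι)

/-- `Y` is an orthonormal basis of the subspace `V_k(acts)` of `L²(A, μ)`: the space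
of (restrictions to `A` of) polynomials of degree at most `k`, orthogonal to all
polynomials of degree `< k`, and invariant under every map `act s`.  The cardinality of
any such family equals `dim V_k(acts)`. -/
def IsONBofInvVk {ι : Type} [Fintype ι] (μ : Measure (ι → ℝ)) (A : Set (ι → ℝ))
    {S : Type} (act : S → (ι → ℝ) → (ι → ℝ)) (k D : ℕ)
    (Y : Fin D → (ι → ℝ) → ℝ) : Prop :=
  (∀ l, ∃ p : MvPolynomial ι ℝ, p.totalDegree ≤ k ∧
      ∀ x ∈ A, Y l x = MvPolynomial.eval x p) ∧
  (∀ l, ∀ q : MvPolynomial ι ℝ, q.totalDegree < k →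
      ∫ x, Y l x * MvPolynomial.eval x q ∂μ = 0) ∧
  (∀ l m, ∫ x, Y l x * Y m x ∂μ = if l = m then (1 : ℝ) else 0) ∧
  (∀ l s, ∀ x ∈ A, Y l (act s x) = Y l x) ∧
  (∀ f : (ι → ℝ) → ℝ,
    (∃ p : MvPolynomial ι ℝ, p.totalDegree ≤ k ∧
        ∀ x ∈ A, f x = MvPolynomial.eval x p) →
    (∀ s, ∀ x ∈ A, f (act s x) = f x) →
    (∀ q : MvPolynomial ι ℝ, q.totalDegree < k →
        ∫ x, f x * MvPolynomial.eval x q ∂μ = 0) →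
    ∃ c : Fin D → ℝ, ∀ x ∈ A, f x = ∑ l, c l * Y l x)

/-- The features shared by the sphere and the hypercube on which the dimension count rests:
`μ` is a probability measure carried by the bounded set `A`, it is invariant under changing the
sign of one coordinate, and `A` is stable under permuting coordinates and contains the cube
`{-1,1}^ι`. -/
structure IsSignSymmetric {ι : Type} [Fintype ι] [DecidableEq ι] (A : Set (ι → ℝ))
    (μ : Measure (ι → ℝ)) : Prop where
  prob : IsProbabilityMeasure μ
  ae_mem : ∀ᵐ x ∂μ, x ∈ A
  bounded : ∃ R : ℝ, ∀ x ∈ A, ∀ i, |x i| ≤ R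
  perm : ∀ (e : Equiv.Perm ι), ∀ x ∈ A, (fun i => x (e i)) ∈ A
  cube : ∀ x : ι → ℝ, (∀ i, x i = 1 ∨ x i = -1) → x ∈ A
  flip : ∀ i, Measure.map (fun (x : ι → ℝ) j => if j = i then -x j else x j) μ = μ

section General

variable {ι : Type} [Fintype ι] [DecidableEq ι]

/-! ### The sphere and the cube are sign-symmetric -/

lemma isSignSymmetric_sphere {μ : Measure (ι → ℝ)}
    (h : IsUniformOnSphereI ι (Real.sqrt (Fintype.card ι)) μ) :
    IsSignSymmetric {x : ι → ℝ | ∑ i, x i ^ 2 = (Fintype.card ι : ℝ)} μ := by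
  obtain ⟨hp, h0, hT⟩ := h
  refine ⟨hp, ?_, ⟨Real.sqrt (Fintype.card ι), ?_⟩, ?_, ?_, ?_⟩
  · rw [Real.sq_sqrt (by positivity)] at h0
    exact h0
  · intro x hx i
    apply Real.abs_le_sqrt
    rw [← (show _ = _ from hx)]
    exact Finset.single_le_sum (f := fun i => x i ^ 2) (fun _ _ => sq_nonneg _)
      (Finset.mem_univ i)
  · intro e x hx
    exact (Equiv.sum_comp e (fun i => x i ^ 2)).trans hx
  · intro x hx
    have : ∀ i, x i ^ 2 = 1 := fun i => by rcases hx i with h | h <;> simp [h]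
    simp [this]
  · intro i
    refine hT
      { toFun := fun (x : ι → ℝ) j => if j = i then -x j else x j
        map_add' := fun x y => by
          funext j; by_cases hj : j = i <;> simp [hj]; ring
        map_smul' := fun c x => by
          funext j; by_cases hj : j = i <;> simp [hj] } ?_
    intro x y
    refine Finset.sum_congr rfl fun j _ => ?_
    by_cases hj : j = i <;> simp [hj]

lemma isSignSymmetric_cube :
    IsSignSymmetric {x : ι → ℝ | ∀ i, x i = 1 ∨ x i = -1} (cubeUniformI ι) := by
  set ν : Measure ℝ := (2 : ENNReal)⁻¹ • (Measure.dirac (1 : ℝ) + Measure.dirac (-1 : ℝ)) with hν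
  have hνp : IsProbabilityMeasure ν := ⟨by
    simp only [hν, Measure.smul_apply, Measure.add_apply, measure_univ, smul_eq_mul]
    rw [one_add_one_eq_two]
    exact ENNReal.inv_mul_cancel (by simp) (by simp)⟩
  have hae : ∀ᵐ t ∂ν, t = 1 ∨ t = -1 := by
    rw [ae_iff, hν]
    simp
  have hneg : MeasurePreserving (fun t : ℝ => -t) ν ν := by
    refine ⟨measurable_neg, ?_⟩
    rw [hν, Measure.map_smul, Measure.map_add _ _ measurable_neg,
      Measure.map_dirac' measurable_neg, Measure.map_dirac' measurable_neg, neg_neg, add_comm]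
  refine ⟨?_, ?_, ⟨1, ?_⟩, ?_, fun x hx => hx, ?_⟩
  · show IsProbabilityMeasure (Measure.pi fun _ : ι => ν)
    infer_instance
  · show ∀ᵐ x ∂(Measure.pi fun _ : ι => ν), ∀ i, x i = 1 ∨ x i = -1
    rw [ae_all_iff]
    intro i
    exact (measurePreserving_eval (fun _ : ι => ν) i).quasiMeasurePreserving.ae hae
  · intro x hx i
    rcases hx i with h | h <;> simp [h]
  · intro e x hx i
    exact hx (e i)
  · intro i
    have := measurePreserving_pi (fun _ : ι => ν) (fun _ : ι => ν)
      (f := fun j t => if j = i then -t else t) (fun j => by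
        by_cases hj : j = i
        · simpa [hj] using hneg
        · simp only [hj, if_false]
          exact MeasurePreserving.id ν)
    exact this.map_eq

lemma IsUniformOnI.isSignSymmetric {A : Set (ι → ℝ)} {μ : Measure (ι → ℝ)}
    (h : IsUniformOnI ι A μ) : IsSignSymmetric A μ := by
  rcases h with ⟨rfl, h⟩ | ⟨rfl, rfl⟩
  · exact isSignSymmetric_sphere h
  · exact isSignSymmetric_cube

lemma IsSignSymmetric.integrable {A : Set (ι → ℝ)} {μ : Measure (ι → ℝ)}
    (h : IsSignSymmetric A μ) (p : MvPolynomial ι ℝ) :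
    Integrable (fun x => MvPolynomial.eval x p) μ := by
  obtain ⟨R, hR⟩ := h.bounded
  have := h.prob
  obtain ⟨C, hC⟩ := (isCompact_univ_pi fun _ : ι => isCompact_Icc (a := -R) (b := R)
    ).exists_bound_of_continuousOn (f := fun x => MvPolynomial.eval x p)
    (MvPolynomial.continuous_eval p).continuousOn
  refine Integrable.of_bound (MvPolynomial.continuous_eval p).aestronglyMeasurable C ?_
  filter_upwards [h.ae_mem] with x hx
  exact hC x fun i _ => abs_le.mp (hR x hx i)

/-! ### Squarefree monomials -/

/-- The exponent vector of the squarefree monomial `∏ i ∈ S, X i`. -/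
noncomputable def sqfreeExp (S : Finset ι) : ι →₀ ℕ :=
  Finsupp.equivFunOnFinite.symm fun i => if i ∈ S then 1 else 0

lemma sqfreeExp_apply (S : Finset ι) (i : ι) : sqfreeExp S i = if i ∈ S then 1 else 0 := rfl

lemma sqfreeExp_injective : Function.Injective (sqfreeExp (ι := ι)) := by
  intro S T h
  ext i
  have := DFunLike.congr_fun h i
  simp only [sqfreeExp_apply] at this
  by_cases h1 : i ∈ S <;> by_cases h2 : i ∈ T <;> simp_all

lemma eval_sqfree (S : Finset ι) (x : ι → ℝ) :
    MvPolynomial.eval x (MvPolynomial.monomial (sqfreeExp S) (1 : ℝ)) = ∏ i ∈ S, x i := by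
  rw [MvPolynomial.eval_monomial, Finsupp.prod_fintype _ _ (by simp)]
  simp [sqfreeExp_apply, pow_ite, Finset.prod_ite_mem]

lemma totalDegree_sqfree (S : Finset ι) :
    (MvPolynomial.monomial (sqfreeExp S) (1 : ℝ)).totalDegree = S.card := by
  rw [MvPolynomial.totalDegree_monomial _ one_ne_zero, Finsupp.sum_fintype _ _ (by simp)]
  simp [sqfreeExp_apply]

/-- A squarefree monomial of degree `k` is orthogonal to every polynomial `q` of degree `< k`:
each monomial of `q` misses some variable of `S`, and flipping the sign of that variable
makes the integrand odd. -/
lemma IsSignSymmetric.sqfree_orthogonal {A : Set (ι → ℝ)} {μ : Measure (ι → ℝ)}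
    (h : IsSignSymmetric A μ) (S : Finset ι) (q : MvPolynomial ι ℝ) (hq : q.totalDegree < S.card) :
    ∫ x, MvPolynomial.eval x (MvPolynomial.monomial (sqfreeExp S) (1 : ℝ)) *
      MvPolynomial.eval x q ∂μ = 0 := by
  have key : ∀ m ∈ q.support, ∫ x, MvPolynomial.eval x
      (MvPolynomial.monomial (sqfreeExp S) (1 : ℝ) *
        MvPolynomial.monomial m (q.coeff m)) ∂μ = 0 := by
    intro m hm
    obtain ⟨i, hiS, hi⟩ : ∃ i ∈ S, m i = 0 := by
      by_contra! hcon
      have h1 : S.card ≤ ∑ i ∈ S, m i := by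
        simpa using Finset.card_nsmul_le_sum S m 1 fun i hi => Nat.one_le_iff_ne_zero.2 (hcon i hi)
      have h2 : ∑ i ∈ S, m i ≤ ∑ i, m i :=
        Finset.sum_le_sum_of_subset (Finset.subset_univ S)
      have h3 := MvPolynomial.le_totalDegree hm
      rw [Finsupp.sum_fintype _ _ (by simp)] at h3
      omega
    set T : (ι → ℝ) → (ι → ℝ) := fun x j => if j = i then -x j else x j with hTdef
    have hTm : Measurable T := by
      refine measurable_pi_lambda _ fun j => ?_
      by_cases hj : j = i
      · simpa [hTdef, hj] using measurable_pi_apply (X := fun _ : ι => ℝ) i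
      · simpa [hTdef, hj] using measurable_pi_apply j
    have hodd : ∀ x, MvPolynomial.eval (T x) (MvPolynomial.monomial (sqfreeExp S) (1 : ℝ) *
        MvPolynomial.monomial m (q.coeff m)) =
        - MvPolynomial.eval x (MvPolynomial.monomial (sqfreeExp S) (1 : ℝ) *
        MvPolynomial.monomial m (q.coeff m)) := by
      intro x
      rw [map_mul, map_mul, eval_sqfree, eval_sqfree, ← Finset.mul_prod_erase S _ hiS,
        ← Finset.mul_prod_erase S _ hiS]
      have e1 : ∏ j ∈ S.erase i, T x j = ∏ j ∈ S.erase i, x j :=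
        Finset.prod_congr rfl fun j hj => by simp [hTdef, Finset.ne_of_mem_erase hj]
      have e2 : MvPolynomial.eval (T x) (MvPolynomial.monomial m (q.coeff m)) =
          MvPolynomial.eval x (MvPolynomial.monomial m (q.coeff m)) := by
        rw [MvPolynomial.eval_monomial, MvPolynomial.eval_monomial,
          Finsupp.prod_fintype _ _ (by simp), Finsupp.prod_fintype _ _ (by simp)]
        congr 1
        refine Finset.prod_congr rfl fun j _ => ?_
        by_cases hj : j = i
        · simp [hj, hi]
        · simp [hTdef, hj]
      have e3 : T x i = - x i := by simp [hTdef]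
      rw [e1, e2, e3]
      ring
    have h1 := integral_map (μ := μ) hTm.aemeasurable
      (f := fun x => MvPolynomial.eval x (MvPolynomial.monomial (sqfreeExp S) (1 : ℝ) *
        MvPolynomial.monomial m (q.coeff m)))
      (MvPolynomial.continuous_eval _).aestronglyMeasurable
    rw [h.flip i] at h1
    simp only [hodd, integral_neg] at h1
    linarith
  have e : ∀ x, MvPolynomial.eval x (MvPolynomial.monomial (sqfreeExp S) (1 : ℝ)) *
      MvPolynomial.eval x q = ∑ m ∈ q.support, MvPolynomial.eval x
      (MvPolynomial.monomial (sqfreeExp S) (1 : ℝ) *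
        MvPolynomial.monomial m (q.coeff m)) := by
    intro x
    conv_lhs => rw [q.as_sum]
    rw [map_sum, Finset.mul_sum]
    simp only [map_mul]
  simp only [e]
  rw [integral_finsetSum _ fun m _ => h.integrable _]
  exact Finset.sum_eq_zero key

lemma exists_sum_single (n : ℕ) (m : ι →₀ ℕ) (hm : ∑ i, m i = n) :
    ∃ f : Fin n → ι, m = ∑ j, Finsupp.single (f j) 1 := by
  induction n generalizing m with
  | zero =>
    refine ⟨Fin.elim0, ?_⟩
    ext i
    simpa using (Finset.sum_eq_zero_iff.mp hm) i (Finset.mem_univ i)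
  | succ n ih =>
    obtain ⟨i, hi⟩ : ∃ i, m i ≠ 0 := by
      by_contra! hcon
      simp [hcon] at hm
    have hle : Finsupp.single i 1 ≤ m := by
      rw [Finsupp.single_le_iff]; omega
    obtain ⟨m', rfl⟩ := exists_add_of_le hle
    obtain ⟨f, rfl⟩ := ih m' (by
      simp only [Finsupp.add_apply, Finset.sum_add_distrib, Finsupp.single_apply] at hm
      simp at hm
      omega)
    exact ⟨Fin.cons i f, by simp [Fin.sum_univ_succ]⟩

end General

section Shift

variable {ι : Type} [Fintype ι] [DecidableEq ι] [AddCommGroup ι]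

/-! ### Upper bound -/

/-- The sum of all index shifts of a polynomial, one for each `s : ι`. -/
noncomputable def shiftSum (p : MvPolynomial ι ℝ) : MvPolynomial ι ℝ :=
  ∑ s : ι, MvPolynomial.rename (Equiv.addRight s) p

omit [DecidableEq ι] in
lemma rename_shiftSum (t : ι) (p : MvPolynomial ι ℝ) :
    MvPolynomial.rename (Equiv.addRight t) (shiftSum p) = shiftSum p := by
  rw [shiftSum, map_sum]
  refine Fintype.sum_equiv (Equiv.addRight t) _ _ fun s => ?_
  rw [MvPolynomial.rename_rename]
  congr 2
  funext i
  simp [add_assoc]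

/-- `V_k(G)` has dimension at most `|ι| ^ (k - 1)`: an invariant polynomial is determined, up to
terms of degree `< k`, by its coefficients at degree-`k` monomials divisible by `X 0`. -/
lemma upper_bound {A : Set (ι → ℝ)} {μ : Measure (ι → ℝ)} (h : IsSignSymmetric A μ)
    {k D : ℕ} (hk : 1 ≤ k) {Y : Fin D → (ι → ℝ) → ℝ}
    (hY : IsONBofInvVk μ A (fun (s : ι) (x : ι → ℝ) (i : ι) => x (i + s)) k D Y) :
    D ≤ Fintype.card ι ^ (k - 1) := by
  obtain ⟨hpoly, horth, hon, hinv, -⟩ := hY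
  choose p hpdeg hp using hpoly
  have heval : ∀ l, ∀ x ∈ A, MvPolynomial.eval x (shiftSum (p l)) = Fintype.card ι * Y l x := by
    intro l x hx
    rw [shiftSum, map_sum]
    have : ∀ s ∈ (Finset.univ : Finset ι),
        MvPolynomial.eval x (MvPolynomial.rename (Equiv.addRight s) (p l)) = Y l x := by
      intro s _
      rw [MvPolynomial.eval_rename, ← hinv l s x hx, show Y l (fun i => x (i + s)) = _ from hp l _ (h.perm (Equiv.addRight s) x hx)]
      rfl
    rw [Finset.sum_congr rfl this]
    simp
  have hdeg : ∀ l, (shiftSum (p l)).totalDegree ≤ k := by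
    intro l
    refine (MvPolynomial.totalDegree_finsetSum _ _).trans (Finset.sup_le fun s _ => ?_)
    exact (MvPolynomial.totalDegree_rename_le _ _).trans (hpdeg l)
  let P : (Fin D → ℝ) →ₗ[ℝ] MvPolynomial ι ℝ :=
    Fintype.linearCombination ℝ fun l => shiftSum (p l)
  have hPapp : ∀ c, P c = ∑ l, c l • shiftSum (p l) := fun c => rfl
  let Φ : (Fin D → ℝ) →ₗ[ℝ] ((Fin (k - 1) → ι) → ℝ) :=
    LinearMap.pi fun f =>
      (MvPolynomial.lcoeff ℝ (Finsupp.single 0 1 + ∑ j, Finsupp.single (f j) 1)).comp P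
  have hΦ : Function.Injective Φ := by
    rw [← LinearMap.ker_eq_bot, LinearMap.ker_eq_bot']
    intro c hc
    have hPinv : ∀ t : ι, MvPolynomial.rename (Equiv.addRight t) (P c) = P c := by
      intro t
      simp only [hPapp, map_sum, map_smul, rename_shiftSum]
    have hPdeg : (P c).totalDegree ≤ k := by
      rw [hPapp]
      refine (MvPolynomial.totalDegree_finsetSum _ _).trans (Finset.sup_le fun l _ => ?_)
      exact (MvPolynomial.totalDegree_smul_le _ _).trans (hdeg l)
    have hlt : (P c).totalDegree < k := by
      rw [MvPolynomial.totalDegree, Finset.sup_lt_iff (show (⊥ : ℕ) < k from hk)]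
      intro m hm
      have hle := (MvPolynomial.le_totalDegree hm).trans hPdeg
      refine lt_of_le_of_ne hle fun heq => ?_
      rw [Finsupp.sum_fintype _ _ (by simp)] at heq
      obtain ⟨i, hi⟩ : ∃ i, m i ≠ 0 := by
        by_contra! hcon
        simp [hcon] at heq
        omega
      -- Shift the monomial so that it becomes divisible by `X 0`.
      set m' := m.mapDomain (Equiv.addRight (-i)) with hm'
      have hcoeff : (P c).coeff m' = (P c).coeff m := by
        conv_lhs => rw [← hPinv (-i)]
        exact MvPolynomial.coeff_rename_mapDomain _ (Equiv.injective _) _ _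
      have hm'app : ∀ j, m' j = m (j + i) := by
        intro j
        have := Finsupp.mapDomain_apply (Equiv.addRight (-i)).injective m (j + i)
        simpa [hm'] using this
      have hm'0 : Finsupp.single 0 1 ≤ m' := by
        rw [Finsupp.single_le_iff, hm'app, zero_add]; omega
      obtain ⟨n, hn⟩ := exists_add_of_le hm'0
      have hsum : ∑ j, m' j = k := by
        rw [← heq]
        simp only [hm'app]
        exact Equiv.sum_comp (Equiv.addRight i) m
      obtain ⟨f, hf⟩ := exists_sum_single (k - 1) n (by
        rw [hn] at hsum
        simp only [Finsupp.add_apply, Finset.sum_add_distrib, Finsupp.single_apply] at hsum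
        simp at hsum
        omega)
      have hz : (P c).coeff (Finsupp.single 0 1 + ∑ j, Finsupp.single (f j) 1) = 0 :=
        congrFun hc f
      rw [← hf, ← hn, hcoeff] at hz
      exact (MvPolynomial.mem_support_iff.mp hm) hz
    -- `P c` now has degree `< k`, so it is orthogonal to every `Y n`.
    funext n
    have h1 := horth n (P c) hlt
    have h2 : ∫ x, Y n x * MvPolynomial.eval x (P c) ∂μ =
        ∫ x, ∑ l, (c l * Fintype.card ι) * (Y n x * Y l x) ∂μ := by
      refine integral_congr_ae ?_
      filter_upwards [h.ae_mem] with x hx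
      rw [hPapp, map_sum, Finset.mul_sum]
      refine Finset.sum_congr rfl fun l _ => ?_
      rw [MvPolynomial.smul_eval, heval l x hx]
      ring
    have hint : ∀ l, Integrable (fun x => Y n x * Y l x) μ := by
      intro l
      refine (h.integrable (p n * p l)).congr ?_
      filter_upwards [h.ae_mem] with x hx
      rw [map_mul, hp n x hx, hp l x hx]
    rw [h1, integral_finsetSum _ fun l _ => (hint l).const_mul _] at h2
    simp only [integral_const_mul, hon] at h2
    simp at h2
    simpa using h2
  have := LinearMap.finrank_le_finrank_of_injective hΦ
  simpa using this

/-! ### Lower bound -/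

/-- The orbit of a finite set under all shifts. -/
def shiftOrbit (S : Finset ι) : Finset (Finset ι) :=
  Finset.univ.image fun t : ι => S.map (Equiv.addRight t).toEmbedding

lemma mem_shiftOrbit (S : Finset ι) : S ∈ shiftOrbit S := by
  refine Finset.mem_image.mpr ⟨0, Finset.mem_univ _, ?_⟩
  ext i
  simp [Equiv.Perm.one_def]

lemma card_shiftOrbit_le (S : Finset ι) : (shiftOrbit S).card ≤ Fintype.card ι :=
  Finset.card_image_le

lemma shiftOrbit_map (S : Finset ι) (s : ι) :
    shiftOrbit (S.map (Equiv.addRight s).toEmbedding) = shiftOrbit S := by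
  have hmm : ∀ t, (S.map (Equiv.addRight s).toEmbedding).map (Equiv.addRight t).toEmbedding =
      S.map (Equiv.addRight (s + t)).toEmbedding := by
    intro t
    rw [Finset.map_map]
    congr 1
    ext i
    simp [add_assoc]
  ext T
  simp only [shiftOrbit, Finset.mem_image, Finset.mem_univ, true_and, hmm]
  constructor
  · rintro ⟨t, ht⟩
    exact ⟨s + t, ht⟩
  · rintro ⟨t, ht⟩
    exact ⟨t - s, by rw [add_sub_cancel]; exact ht⟩

/-- `V_k(G)` has dimension at least the number of orbits of `k`-subsets of `ι`, each of which has
at most `|ι|` elements. -/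
lemma lower_bound {A : Set (ι → ℝ)} {μ : Measure (ι → ℝ)} (h : IsSignSymmetric A μ)
    {k D : ℕ} {Y : Fin D → (ι → ℝ) → ℝ}
    (hY : IsONBofInvVk μ A (fun (s : ι) (x : ι → ℝ) (i : ι) => x (i + s)) k D Y) :
    (Fintype.card ι).choose k ≤ Fintype.card ι * D := by
  obtain ⟨-, -, -, -, hspan⟩ := hY
  set K : Finset (Finset ι) := Finset.powersetCard k Finset.univ with hK
  set O : Finset (Finset (Finset ι)) := K.image shiftOrbit with hO
  have hcount : K.card ≤ Fintype.card ι * O.card := by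
    refine Finset.card_le_mul_card_image K _ fun o ho => ?_
    obtain ⟨S, -, rfl⟩ := Finset.mem_image.mp ho
    refine le_trans (Finset.card_le_card ?_) (card_shiftOrbit_le S)
    intro T hT
    rw [← (Finset.mem_filter.mp hT).2]
    exact mem_shiftOrbit T
  -- The orbit sum of squarefree monomials attached to `o`.
  let F : Finset (Finset ι) → MvPolynomial ι ℝ := fun o =>
    ∑ S ∈ K with shiftOrbit S = o, MvPolynomial.monomial (sqfreeExp S) (1 : ℝ)
  have hcard : ∀ {S}, S ∈ K → S.card = k := fun hS => (Finset.mem_powersetCard.mp hS).2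
  have hF : ∀ o, ∃ c : Fin D → ℝ, ∀ x ∈ A, MvPolynomial.eval x (F o) = ∑ l, c l * Y l x := by
    intro o
    refine hspan (fun x => MvPolynomial.eval x (F o)) ⟨F o, ?_, fun _ _ => rfl⟩ ?_ ?_
    · refine (MvPolynomial.totalDegree_finsetSum _ _).trans (Finset.sup_le fun S hS => ?_)
      rw [totalDegree_sqfree, hcard (Finset.mem_filter.mp hS).1]
    · intro s x _
      simp only [F, map_sum, eval_sqfree]
      refine Finset.sum_equiv (Equiv.finsetCongr (Equiv.addRight s)) ?_ ?_
      · intro S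
        simp [hK, Finset.mem_powersetCard, shiftOrbit_map, Equiv.finsetCongr_apply]
      · intro S _
        simp [Equiv.finsetCongr_apply]
    · intro q hq
      simp only [F, map_sum, Finset.sum_mul]
      rw [integral_finsetSum]
      · refine Finset.sum_eq_zero fun S hS => h.sqfree_orthogonal S q ?_
        rwa [hcard (Finset.mem_filter.mp hS).1]
      · intro S _
        simpa only [map_mul] using
          h.integrable (MvPolynomial.monomial (sqfreeExp S) (1 : ℝ) * q)
  choose a ha using hF
  have hlin : LinearIndependent ℝ (fun o : O => a o) := by
    rw [Fintype.linearIndependent_iff]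
    intro g hg o
    have hzero : ∑ o : O, MvPolynomial.C (g o) * F o = 0 := by
      -- Multilinear polynomials vanishing on the cube are zero.
      refine MvPolynomial.eq_zero_of_eval_zero_at_prod_finset _ (fun _ => {1, -1}) ?_ ?_
      · intro i
        rw [Finset.card_pair (by norm_num)]
        refine lt_of_le_of_lt (MvPolynomial.degreeOf_sum_le i _ _) ?_
        rw [Finset.sup_lt_iff (by norm_num)]
        intro o _
        refine lt_of_le_of_lt (MvPolynomial.degreeOf_C_mul_le _ _ _) ?_
        refine lt_of_le_of_lt (MvPolynomial.degreeOf_sum_le i _ _) ?_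
        rw [Finset.sup_lt_iff (by norm_num)]
        intro S _
        rw [MvPolynomial.degreeOf_monomial_eq _ _ one_ne_zero, sqfreeExp_apply]
        split_ifs <;> norm_num
      · intro x hx
        have hxA : x ∈ A := h.cube x fun i => by simpa using hx i
        simp only [map_sum, map_mul, MvPolynomial.eval_C, ha _ x hxA, Finset.mul_sum]
        rw [Finset.sum_comm]
        refine Finset.sum_eq_zero fun l _ => ?_
        have := congrFun hg l
        simp only [Finset.sum_apply, Pi.smul_apply, smul_eq_mul, Pi.zero_apply] at this
        rw [← zero_mul (Y l x), ← this, Finset.sum_mul]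
        simp only [mul_assoc]
    obtain ⟨S, hS, hSo⟩ := Finset.mem_image.mp o.2
    have hFc : ∀ o' : Finset (Finset ι), (F o').coeff (sqfreeExp S) =
        if shiftOrbit S = o' then 1 else 0 := by
      intro o'
      simp only [F, MvPolynomial.coeff_sum, MvPolynomial.coeff_monomial,
        sqfreeExp_injective.eq_iff]
      simp [Finset.sum_ite_eq', hS]
    have hc := congrArg (MvPolynomial.coeff (sqfreeExp S)) hzero
    simp only [MvPolynomial.coeff_sum, MvPolynomial.coeff_C_mul, hFc, hSo,
      MvPolynomial.coeff_zero] at hc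
    simpa [← Subtype.ext_iff] using hc
  have hOD : O.card ≤ D := by
    simpa using hlin.fintype_card_le_finrank
  have hKc : K.card = (Fintype.card ι).choose k := by
    rw [hK, Finset.card_powersetCard, Finset.card_univ]
  rw [← hKc]
  exact hcount.trans (Nat.mul_le_mul_left _ hOD)

lemma bounds {A : Set (ι → ℝ)} {μ : Measure (ι → ℝ)} (h : IsUniformOnI ι A μ)
    {k D : ℕ} (hk : 1 ≤ k) (hd : 2 * k ≤ Fintype.card ι) {Y : Fin D → (ι → ℝ) → ℝ}
    (hY : IsONBofInvVk μ A (fun (s : ι) (x : ι → ℝ) (i : ι) => x (i + s)) k D Y) :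
    1 / (2 ^ k * (k.factorial : ℝ)) * (Fintype.card ι : ℝ) ^ (k - 1) ≤ D ∧
      (D : ℝ) ≤ 1 * (Fintype.card ι : ℝ) ^ (k - 1) := by
  have hu := upper_bound h.isSignSymmetric hk hY
  have hl := lower_bound h.isSignSymmetric hY
  refine ⟨?_, by rw [one_mul]; exact_mod_cast hu⟩
  set d := Fintype.card ι
  have hdpos : (0 : ℝ) < d := by
    have : 0 < d := by omega
    exact_mod_cast this
  have h1 : ((d + 1 - k : ℕ) ^ k : ℝ) / (k.factorial : ℝ) ≤ d.choose k := Nat.pow_le_choose k d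
  have h2 : (d : ℝ) / 2 ≤ ((d + 1 - k : ℕ) : ℝ) := by
    rw [div_le_iff₀ (by norm_num)]
    have : d ≤ (d + 1 - k) * 2 := by omega
    exact_mod_cast this
  have h3 : ((d : ℝ) / 2) ^ k / (k.factorial : ℝ) ≤ d * D := by
    refine le_trans ?_ (h1.trans (by exact_mod_cast hl))
    gcongr
  obtain ⟨n, rfl⟩ : ∃ n, k = n + 1 := ⟨k - 1, by omega⟩
  refine le_of_mul_le_mul_left (le_trans (le_of_eq ?_) h3) hdpos
  rw [Nat.add_sub_cancel, div_pow, pow_succ (d : ℝ)]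
  field_simp

end Shift

/-- **Dimension counting for the cyclic groups: `dim V_{d,k}(G_d) = Θ(d^{k-1})` for
`G_d ∈ {Cyc_d, Cyc2D_{d₁,d₂}}` on the sphere or the hypercube.** The dimension is
expressed as the cardinality `D` of any orthonormal basis of `V_{d,k}(G_d)`. -/
theorem degeneracy_cyclic (k : ℕ) (hk : 1 ≤ k) :
    ∃ c C : ℝ, 0 < c ∧ c ≤ C ∧ ∃ d₀ : ℕ,
      (∀ d : ℕ, d₀ ≤ d →
        ∀ (A : Set (Fin d → ℝ)) (μ : Measure (Fin d → ℝ)), IsUniformOnI (Fin d) A μ →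
          ∀ (D : ℕ) (Ybar : Fin D → (Fin d → ℝ) → ℝ),
            IsONBofInvVk μ A (fun (l : Fin d) (x : Fin d → ℝ) (i : Fin d) => x (i + l))
              k D Ybar →
            c * (d : ℝ) ^ (k - 1) ≤ D ∧ (D : ℝ) ≤ C * (d : ℝ) ^ (k - 1)) ∧
      (∀ d₁ d₂ : ℕ, d₀ ≤ d₁ * d₂ →
        ∀ (A : Set (Fin d₁ × Fin d₂ → ℝ)) (μ : Measure (Fin d₁ × Fin d₂ → ℝ)),
          IsUniformOnI (Fin d₁ × Fin d₂) A μ →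
          ∀ (D : ℕ) (Ybar : Fin D → (Fin d₁ × Fin d₂ → ℝ) → ℝ),
            IsONBofInvVk μ A
              (fun (s : Fin d₁ × Fin d₂) (x : Fin d₁ × Fin d₂ → ℝ)
                (p : Fin d₁ × Fin d₂) => x (p.1 + s.1, p.2 + s.2)) k D Ybar →
            c * ((d₁ : ℝ) * d₂) ^ (k - 1) ≤ D ∧
              (D : ℝ) ≤ C * ((d₁ : ℝ) * d₂) ^ (k - 1)) := by
  refine ⟨1 / (2 ^ k * (k.factorial : ℝ)), 1, by positivity, ?_, 2 * k, ?_, ?_⟩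
  · rw [div_le_one (by positivity)]
    have h1 : (1 : ℝ) ≤ 2 ^ k := one_le_pow₀ (by norm_num)
    have h2 : (1 : ℝ) ≤ (k.factorial : ℝ) := by exact_mod_cast Nat.succ_le_of_lt k.factorial_pos
    nlinarith
  · intro d hd A μ h D Y hY
    have : NeZero d := ⟨by omega⟩
    simpa using bounds h hk (by simpa using hd) hY
  · intro d₁ d₂ hd A μ h D Y hY
    have hpos : 0 < d₁ * d₂ := by omega
    have : NeZero d₁ := ⟨(Nat.pos_of_mul_pos_right hpos).ne'⟩
    have : NeZero d₂ := ⟨(Nat.pos_of_mul_pos_left hpos).ne'⟩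
    simpa using bounds (ι := Fin d₁ × Fin d₂) h hk (by simpa using hd) hY
end

section
/- Let G_d ∈ {Cyc_d, Cyc2D_{d₁,d₂}} with d = d₁·d₂ in the two-dimensional case, and define F_k(z) = ∫_{G_d} (⟨z, g·z⟩/d)^k π_d(dg) (a finite average over the group elements). Then for any fixed integer k ≥ 1 there exist constants 0 < c ≤ C < ∞ (depending only on k) and d₀ such that for all admissible d ≥ d₀: (i) c/d ≤ E_{z~N(0,I_d)}[F_k(z)] ≤ C/d; (ii) c/d ≤ E_{θ~Unif(Q^d)}[F_k(θ)] ≤ C/d; (iii) c/d ≤ E_{θ~Unif(S^{d−1}(√d))}[F_k(θ)] ≤ C/d. -/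
/-!
Only two features of the three measures matter: invariance under the reflections
`z_i ↦ -z_i` and control of `E ‖z‖^{2k}`. Write `S = ‖z‖²` and `X_l = ⟨z, g_l · z⟩`, the shifts `l`
running over a finite abelian group. The whole theorem comes down to
`E S^k ≤ ∑_l E X_l^k ≤ 3 E S^k` (used in `SignSymm.avg_bounds`).

The term `l = 0` is `E S^k`. For the lower bound, the other terms are nonnegative: `X_l^k` is a
polynomial with nonnegative coefficients, and the mean of a monomial is zero if some exponent is
odd and nonnegative otherwise (`SignSymm.aeval_nonneg`). For the upper bound with `k ≥ 2`,
`|X_l| ≤ S` gives `X_l^k ≤ X_l² S^{k-2}`. In the expansion of `E X_l² S^{k-2}` with `l ≠ 0`, the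
term `z_a z_{a+l} z_b z_{b+l} S^{k-2}` has mean zero unless `b = a`, or `b = a + l` and
`2 l = 0` (`SignSymm.quartic_le`); hence the sum over `l ≠ 0` is at most
`2 ∑_{a,l} E z_a² z_{a+l}² S^{k-2} = 2 E S^k`. For `k = 1` the terms with `l ≠ 0` vanish.

Finally `E S = d` gives `E S^k ≥ d^k` by Jensen's inequality. On the cube and on the sphere `S = d`
almost surely, and for the Gaussian `E S^k ≤ d^k E x^{2k}` by convexity. So `c = 1` and
`C = 3 max(1, E x^{2k})` work, with `d₀ = 1`.
-/

open MeasureTheory ProbabilityTheory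

/-- The standard Gaussian measure `N(0, I)` on `ℝ^ι`. -/
noncomputable def stdGaussianI (ι : Type) [Fintype ι] : Measure (ι → ℝ) :=
  Measure.pi fun _ => gaussianReal 0 1

/-- `F_k(z) = (1/d) ∑_{l=0}^{d-1} (⟨z, g_l·z⟩/d)^k` for the cyclic group `Cyc_d`,
where `g_l` is the cyclic shift by `l` coordinates. -/
noncomputable def Fcyc (k d : ℕ) (z : Fin d → ℝ) : ℝ :=
  (1 / d : ℝ) * ∑ l : Fin d, ((∑ i, z i * z (i + l)) / d) ^ k

/-- `F_k(z) = (1/(d₁d₂)) ∑_{s,t} (⟨z, g_{st}·z⟩/d)^k` for the two-dimensional cyclic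
group `Cyc2D_{d₁,d₂}` of independent cyclic shifts of rows and columns. -/
noncomputable def Fcyc2 (k d₁ d₂ : ℕ) (z : Fin d₁ × Fin d₂ → ℝ) : ℝ :=
  (1 / (d₁ * d₂) : ℝ) * ∑ s : Fin d₁ × Fin d₂,
    ((∑ p : Fin d₁ × Fin d₂, z p * z (p.1 + s.1, p.2 + s.2)) / (d₁ * d₂)) ^ k

namespace SignSymmetric

set_option linter.unusedSectionVars false

variable {ι : Type} [Fintype ι] [DecidableEq ι]

/-! ### Moments of sign-symmetric measures -/

/-- The reflection of `ℝ^ι` that changes the sign of the coordinate `i`. -/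
def flip (i : ι) (z : ι → ℝ) : ι → ℝ := fun j => if j = i then -z j else z j

@[simp] lemma flip_same (i : ι) (z : ι → ℝ) : flip i z i = -z i := by simp [flip]

lemma flip_ne {i j : ι} (h : j ≠ i) (z : ι → ℝ) : flip i z j = z j := by simp [flip, h]

lemma flip_sq (i j : ι) (z : ι → ℝ) : flip i z j ^ 2 = z j ^ 2 := by
  by_cases h : j = i <;> simp [flip, h]

/-- A measure on `ℝ^ι` that is invariant under every coordinate reflection and integrates every
monomial. -/
structure SignSymm (μ : Measure (ι → ℝ)) : Prop where
  flip : ∀ i, MeasurePreserving (flip i) μ μ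
  integrable : ∀ s : ι → ℕ, Integrable (fun z : ι → ℝ => ∏ i, z i ^ s i) μ

lemma SignSymm.integral_eq_zero {μ : Measure (ι → ℝ)} (h : SignSymm μ) (i : ι)
    {f : (ι → ℝ) → ℝ} (hf : Continuous f) (hodd : ∀ z, f (SignSymmetric.flip i z) = -f z) :
    ∫ z, f z ∂μ = 0 := by
  have h1 : ∫ z, f (SignSymmetric.flip i z) ∂μ = ∫ z, f z ∂μ := by
    conv_rhs => rw [← (h.flip i).map_eq]
    rw [integral_map (h.flip i).measurable.aemeasurable]
    exact hf.aestronglyMeasurable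
  simp only [hodd, integral_neg] at h1
  linarith

lemma SignSymm.integrable_eval {μ : Measure (ι → ℝ)} (h : SignSymm μ) (p : MvPolynomial ι ℝ) :
    Integrable (fun z : ι → ℝ => MvPolynomial.eval z p) μ := by
  simp only [MvPolynomial.eval_eq']
  exact integrable_finsetSum _ fun s _ => (h.integrable s).const_mul _

/-- A monomial is either odd under some coordinate reflection, so that its mean vanishes, or has
only even exponents, so that it is nonnegative everywhere. -/
lemma SignSymm.monomial_nonneg {μ : Measure (ι → ℝ)} (h : SignSymm μ) (s : ι → ℕ) :
    0 ≤ ∫ z, ∏ i, z i ^ s i ∂μ := by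
  by_cases hs : ∀ i, Even (s i)
  · exact integral_nonneg fun z => Finset.prod_nonneg fun i _ => (hs i).pow_nonneg _
  · push Not at hs
    obtain ⟨i, hi⟩ := hs
    refine (h.integral_eq_zero i (by fun_prop) fun z => ?_).ge
    rw [← Finset.mul_prod_erase _ _ (Finset.mem_univ i),
      ← Finset.mul_prod_erase _ _ (Finset.mem_univ i), flip_same,
      (Nat.not_even_iff_odd.mp hi).neg_pow, neg_mul]
    congr 2
    exact Finset.prod_congr rfl fun j hj => by rw [flip_ne (Finset.ne_of_mem_erase hj)]

/-- Natural-number coefficients encode that the polynomial has nonnegative coefficients. -/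
lemma SignSymm.aeval_nonneg {μ : Measure (ι → ℝ)} (h : SignSymm μ) (p : MvPolynomial ι ℕ) :
    0 ≤ ∫ z, MvPolynomial.aeval z p ∂μ := by
  simp only [MvPolynomial.aeval_def, MvPolynomial.eval₂_eq']
  rw [integral_finsetSum p.support fun (s : ι →₀ ℕ) _ => (h.integrable s).const_mul _]
  refine Finset.sum_nonneg fun s _ => ?_
  rw [integral_const_mul]
  exact mul_nonneg (by simp) (h.monomial_nonneg s)

/-! ### The norm and the shift overlaps -/

/-- The squared Euclidean norm. -/
def normSq (z : ι → ℝ) : ℝ := ∑ i, z i ^ 2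

lemma normSq_nonneg (z : ι → ℝ) : 0 ≤ normSq z := Finset.sum_nonneg fun _ _ => sq_nonneg _

lemma continuous_normSq : Continuous (normSq : (ι → ℝ) → ℝ) := by unfold normSq; fun_prop

lemma normSq_flip (i : ι) (z : ι → ℝ) : normSq (flip i z) = normSq z := by
  simp only [normSq, flip_sq]

lemma SignSymm.integrable_normSq_pow {μ : Measure (ι → ℝ)} (h : SignSymm μ) (k : ℕ) :
    Integrable (fun z => normSq z ^ k) μ := by
  have := h.integrable_eval ((∑ i, MvPolynomial.X i ^ 2) ^ k)
  simpa [normSq] using this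

variable [AddCommGroup ι]

/-- The overlap `⟨z, g_l · z⟩` of `z` with its shift by `l`. -/
def overlap (l : ι) (z : ι → ℝ) : ℝ := ∑ i, z i * z (i + l)

lemma continuous_overlap (l : ι) : Continuous (overlap l) := by unfold overlap; fun_prop

lemma overlap_zero (z : ι → ℝ) : overlap 0 z = normSq z := by simp [overlap, normSq, sq]

lemma abs_overlap_le (l : ι) (z : ι → ℝ) : |overlap l z| ≤ normSq z := by
  have hs : ∑ i, z (i + l) ^ 2 = normSq z :=
    Equiv.sum_comp (Equiv.addRight l) fun i => z i ^ 2
  calc |overlap l z| ≤ ∑ i, |z i * z (i + l)| := Finset.abs_sum_le_sum_abs _ _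
    _ ≤ ∑ i, (z i ^ 2 + z (i + l) ^ 2) / 2 := Finset.sum_le_sum fun i _ => by
        rw [abs_le]; constructor <;>
          nlinarith [sq_nonneg (z i + z (i + l)), sq_nonneg (z i - z (i + l))]
    _ = normSq z := by
        rw [← Finset.sum_div, Finset.sum_add_distrib, hs, normSq]; ring

lemma SignSymm.integrable_overlap_pow {μ : Measure (ι → ℝ)} (h : SignSymm μ) (l : ι) (k : ℕ) :
    Integrable (fun z => overlap l z ^ k) μ := by
  have := h.integrable_eval ((∑ i, MvPolynomial.X i * MvPolynomial.X (i + l)) ^ k)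
  simpa [overlap] using this

lemma SignSymm.overlap_pow_nonneg {μ : Measure (ι → ℝ)} (h : SignSymm μ) (l : ι) (k : ℕ) :
    0 ≤ ∫ z, overlap l z ^ k ∂μ := by
  have := h.aeval_nonneg ((∑ i, MvPolynomial.X i * MvPolynomial.X (i + l)) ^ k)
  simpa [overlap] using this

lemma SignSymm.integral_overlap {μ : Measure (ι → ℝ)} (h : SignSymm μ) {l : ι} (hl : l ≠ 0) :
    ∫ z, overlap l z ∂μ = 0 := by
  unfold overlap
  rw [integral_finsetSum]
  · refine Finset.sum_eq_zero fun i _ => h.integral_eq_zero i (by fun_prop) fun z => ?_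
    rw [flip_same, flip_ne (by simpa using hl), neg_mul]
  · intro i _
    have := h.integrable_eval (MvPolynomial.X i * MvPolynomial.X (i + l))
    simpa only [map_mul, MvPolynomial.eval_X] using this

lemma SignSymm.integrable_quartic {μ : Measure (ι → ℝ)} (h : SignSymm μ) (m : ℕ) (a b c e : ι) :
    Integrable (fun z : ι → ℝ => z a * z b * (z c * z e) * normSq z ^ m) μ := by
  have := h.integrable_eval (MvPolynomial.X a * MvPolynomial.X b *
    (MvPolynomial.X c * MvPolynomial.X e) * (∑ i, MvPolynomial.X i ^ 2) ^ m)
  simpa [normSq] using this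

/-! ### Second moments of the off-identity overlaps -/

/-- For `l ≠ 0` the product `z_a z_{a+l} z_b z_{b+l}` is odd in some coordinate unless `b = a`, or
`b = a + l` and `2 l = 0`. -/
lemma SignSymm.quartic_le {μ : Measure (ι → ℝ)} (h : SignSymm μ) (m : ℕ) {l : ι} (hl : l ≠ 0)
    (a b : ι) :
    ∫ z, z a * z (a + l) * (z b * z (b + l)) * normSq z ^ m ∂μ ≤
      ((if b = a then 1 else 0) + (if b = a + l then 1 else 0)) *
        ∫ z, z a ^ 2 * z (a + l) ^ 2 * normSq z ^ m ∂μ := by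
  have hJ : 0 ≤ ∫ z, z a ^ 2 * z (a + l) ^ 2 * normSq z ^ m ∂μ :=
    integral_nonneg fun z => mul_nonneg (by positivity) (pow_nonneg (normSq_nonneg z) m)
  have hal : a + l ≠ a := by simpa using hl
  have hR : 0 ≤ (((if b = a then 1 else 0) + (if b = a + l then 1 else 0) : ℝ)) *
        ∫ z, z a ^ 2 * z (a + l) ^ 2 * normSq z ^ m ∂μ := by
    refine mul_nonneg ?_ hJ
    split_ifs <;> norm_num
  have hc : Continuous fun z : ι → ℝ => z a * z (a + l) * (z b * z (b + l)) * normSq z ^ m := by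
    have := continuous_normSq (ι := ι)
    fun_prop
  by_cases hba : b = a
  · subst hba
    rw [if_pos rfl, if_neg hal.symm]
    refine le_of_eq ?_
    rw [add_zero, one_mul]
    congr 1; ext z; ring
  by_cases hbl : b + l = a
  · by_cases hb : b = a + l
    · rw [if_neg hba, if_pos hb, hbl, hb]
      refine le_of_eq ?_
      rw [zero_add, one_mul]
      congr 1; ext z; ring
    · refine le_trans (le_of_eq ?_) hR
      refine h.integral_eq_zero (a + l) hc fun z => ?_
      rw [normSq_flip, flip_same, flip_ne hal.symm, flip_ne hb, hbl, flip_ne hal.symm]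
      ring
  · refine le_trans (le_of_eq ?_) hR
    refine h.integral_eq_zero a hc fun z => ?_
    rw [normSq_flip, flip_same, flip_ne hal, flip_ne hba, flip_ne hbl]
    ring

lemma SignSymm.overlap_sq_le {μ : Measure (ι → ℝ)} (h : SignSymm μ) (m : ℕ) {l : ι} (hl : l ≠ 0) :
    ∫ z, overlap l z ^ 2 * normSq z ^ m ∂μ ≤
      2 * ∑ a, ∫ z, z a ^ 2 * z (a + l) ^ 2 * normSq z ^ m ∂μ := by
  have he : ∀ z : ι → ℝ, overlap l z ^ 2 * normSq z ^ m =
      ∑ a, ∑ b, z a * z (a + l) * (z b * z (b + l)) * normSq z ^ m := fun z => by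
    rw [sq, overlap, Finset.sum_mul_sum, Finset.sum_mul]
    simp only [Finset.sum_mul]
  simp only [he]
  rw [integral_finsetSum _ fun a _ => integrable_finsetSum _ fun b _ => h.integrable_quartic ..,
    Finset.mul_sum]
  refine Finset.sum_le_sum fun a _ => ?_
  rw [integral_finsetSum _ fun b _ => h.integrable_quartic ..]
  refine (Finset.sum_le_sum fun b _ => h.quartic_le m hl a b).trans (le_of_eq ?_)
  rw [← Finset.sum_mul, Finset.sum_add_distrib]
  norm_num

/-- Since `(a, l) ↦ (a, a + l)` is a bijection, the `z_a² z_{a+l}²` add up to `‖z‖⁴`. -/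
lemma SignSymm.sum_overlap_sq_le {μ : Measure (ι → ℝ)} (h : SignSymm μ) (m : ℕ) :
    ∑ l ∈ Finset.univ.erase (0 : ι), ∫ z, overlap l z ^ 2 * normSq z ^ m ∂μ ≤
      2 * ∫ z, normSq z ^ (m + 2) ∂μ := by
  have hint : ∀ a b : ι, Integrable (fun z : ι → ℝ => z a ^ 2 * z b ^ 2 * normSq z ^ m) μ :=
    fun a b => by
      refine (h.integrable_quartic m a a b b).congr (.of_forall fun z => ?_)
      ring
  have he : ∀ z : ι → ℝ, normSq z ^ (m + 2) =
      ∑ l, ∑ a, z a ^ 2 * z (a + l) ^ 2 * normSq z ^ m := fun z => by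
    rw [Finset.sum_comm]
    simp only [← Finset.sum_mul, ← Finset.mul_sum]
    have hs : ∀ a, ∑ l, z (a + l) ^ 2 = normSq z := fun a =>
      Equiv.sum_comp (Equiv.addLeft a) fun i => z i ^ 2
    simp only [hs, ← Finset.sum_mul]
    rw [← normSq]; ring
  calc _ ≤ ∑ l ∈ Finset.univ.erase (0 : ι),
        2 * ∑ a, ∫ z, z a ^ 2 * z (a + l) ^ 2 * normSq z ^ m ∂μ :=
        Finset.sum_le_sum fun l hl => h.overlap_sq_le m (Finset.ne_of_mem_erase hl)
    _ ≤ ∑ l, 2 * ∑ a, ∫ z, z a ^ 2 * z (a + l) ^ 2 * normSq z ^ m ∂μ := by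
        refine Finset.sum_le_sum_of_subset_of_nonneg (Finset.erase_subset _ _) fun l _ _ => ?_
        refine mul_nonneg zero_le_two (Finset.sum_nonneg fun a _ => integral_nonneg fun z => ?_)
        exact mul_nonneg (by positivity) (pow_nonneg (normSq_nonneg z) m)
    _ = _ := by
        simp only [he]
        rw [← Finset.mul_sum, integral_finsetSum _ fun l _ => integrable_finsetSum _ fun a _ =>
          hint _ _]
        congr 1
        exact Finset.sum_congr rfl fun l _ => (integral_finsetSum _ fun a _ => hint _ _).symm

/-- The off-identity shifts contribute at most twice the identity: `|⟨z, g_l · z⟩| ≤ ‖z‖²` reduces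
exponents `k ≥ 2` to the second moment. -/
lemma SignSymm.sum_erase_le {μ : Measure (ι → ℝ)} (h : SignSymm μ) {k : ℕ} (hk : 1 ≤ k) :
    ∑ l ∈ Finset.univ.erase (0 : ι), ∫ z, overlap l z ^ k ∂μ ≤ 2 * ∫ z, normSq z ^ k ∂μ := by
  obtain rfl | ⟨m, rfl⟩ : k = 1 ∨ ∃ m, k = m + 2 := by
    rcases k with _ | _ | m
    · omega
    · exact .inl rfl
    · exact .inr ⟨m, rfl⟩
  · simp only [pow_one]
    rw [Finset.sum_eq_zero fun l hl => h.integral_overlap (Finset.ne_of_mem_erase hl)]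
    exact mul_nonneg zero_le_two (integral_nonneg normSq_nonneg)
  · refine (Finset.sum_le_sum fun l _ => ?_).trans (h.sum_overlap_sq_le m)
    have hint : Integrable (fun z => overlap l z ^ 2 * normSq z ^ m) μ := by
      have := h.integrable_eval ((∑ i, MvPolynomial.X i * MvPolynomial.X (i + l)) ^ 2 *
        (∑ i, MvPolynomial.X i ^ 2) ^ m)
      simpa [normSq, overlap] using this
    refine integral_mono (h.integrable_overlap_pow l _) hint fun z => ?_
    calc overlap l z ^ (m + 2) = overlap l z ^ 2 * overlap l z ^ m := by ring
      _ ≤ overlap l z ^ 2 * normSq z ^ m := by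
        refine mul_le_mul_of_nonneg_left ?_ (sq_nonneg _)
        calc overlap l z ^ m ≤ |overlap l z ^ m| := le_abs_self _
          _ = |overlap l z| ^ m := abs_pow _ _
          _ ≤ normSq z ^ m := pow_le_pow_left₀ (abs_nonneg _) (abs_overlap_le l z) m

/-! ### The group average -/

/-- The average of `(⟨z, g_l · z⟩ / N)^k` over all shifts `l`, where the real parameter `N` stands for
the cardinality of `ι`, which is both the dimension and the order of the group. -/
noncomputable def avg (k : ℕ) (N : ℝ) (z : ι → ℝ) : ℝ := (1 / N) * ∑ l : ι, (overlap l z / N) ^ k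

/-- The mean of the group average lies between one and three times the contribution of the
identity. -/
lemma SignSymm.avg_bounds {μ : Measure (ι → ℝ)} [IsProbabilityMeasure μ] (h : SignSymm μ) {k : ℕ}
    (hk : 1 ≤ k) {N M C : ℝ} (hN : 0 < N) (h1 : ∫ z, normSq z ∂μ = N)
    (hM : ∫ z, normSq z ^ k ∂μ ≤ M * N ^ k) (hC : 3 * M ≤ C) :
    1 / N ≤ ∫ z, avg k N z ∂μ ∧ ∫ z, avg k N z ∂μ ≤ C / N := by
  have hNk : 0 < N ^ k := pow_pos hN k
  have hE : ∫ z, avg k N z ∂μ = (∑ l, ∫ z, overlap l z ^ k ∂μ) / N ^ k / N := by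
    unfold avg
    simp only [div_pow]
    rw [integral_const_mul, integral_finsetSum _ fun l _ =>
      (h.integrable_overlap_pow l k).div_const _]
    simp only [integral_div]
    rw [← Finset.sum_div]; ring
  have hsplit : ∑ l, ∫ z, overlap l z ^ k ∂μ = ∫ z, normSq z ^ k ∂μ +
      ∑ l ∈ Finset.univ.erase (0 : ι), ∫ z, overlap l z ^ k ∂μ := by
    rw [← Finset.add_sum_erase _ _ (Finset.mem_univ (0 : ι))]
    simp only [overlap_zero]
  have hnn : 0 ≤ ∑ l ∈ Finset.univ.erase (0 : ι), ∫ z, overlap l z ^ k ∂μ :=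
    Finset.sum_nonneg fun l _ => h.overlap_pow_nonneg l k
  have hup := h.sum_erase_le hk
  -- Jensen's inequality for `x ↦ x ^ k`, in the form of Bernoulli's inequality at `‖z‖² / N`.
  have hlow : N ^ k ≤ ∫ z, normSq z ^ k ∂μ := by
    have hi1 : Integrable (fun z => normSq z) μ := by simpa using h.integrable_normSq_pow 1
    have hb : ∀ z : ι → ℝ, N ^ k * (1 + k * (normSq z / N - 1)) ≤ normSq z ^ k := fun z => by
      have h0 : 0 ≤ normSq z / N := div_nonneg (normSq_nonneg z) hN.le
      have := one_add_mul_le_pow (a := normSq z / N - 1) (by linarith) k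
      calc _ ≤ N ^ k * (1 + (normSq z / N - 1)) ^ k := mul_le_mul_of_nonneg_left this hNk.le
        _ = normSq z ^ k := by rw [← mul_pow]; congr 1; field_simp; ring
    have hi2 : Integrable (fun z => (k : ℝ) * (normSq z / N - 1)) μ :=
      ((hi1.div_const N).sub (integrable_const 1)).const_mul _
    have := integral_mono (((integrable_const (1 : ℝ)).add hi2).const_mul (N ^ k))
      (h.integrable_normSq_pow k) hb
    refine le_trans (le_of_eq ?_) this
    simp only [Pi.add_apply]
    rw [integral_const_mul, integral_add (integrable_const _) hi2, integral_const_mul,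
      integral_sub (hi1.div_const N) (integrable_const _), integral_div, h1]
    simp [hN.ne']
  rw [hE, hsplit]
  constructor
  · gcongr
    rw [one_le_div hNk]; linarith
  · gcongr
    rw [div_le_iff₀ hNk]
    nlinarith

end SignSymmetric

section Measures

set_option linter.unusedSectionVars false

open SignSymmetric

variable {ι : Type} [Fintype ι] [DecidableEq ι]

/-! ### Product measures: the Gaussian and the cube -/

lemma signSymm_pi (ν : Measure ℝ) [IsProbabilityMeasure ν]
    (hneg : ν.map (fun x => -x) = ν) (hint : ∀ n : ℕ, Integrable (fun x : ℝ => x ^ n) ν) :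
    SignSymm (Measure.pi fun _ : ι => ν) where
  flip i := by
    have := measurePreserving_pi (fun _ : ι => ν) (fun _ : ι => ν)
      (f := fun j x => if j = i then -x else x) fun j => by
        by_cases hj : j = i
        · simpa [hj] using ⟨measurable_neg, hneg⟩
        · simpa [hj, Function.id_def] using MeasurePreserving.id ν
    exact this
  integrable s := Integrable.fintype_prod (f := fun i x => x ^ s i) fun i => hint (s i)

lemma integral_pi_eval (ν : Measure ℝ) [IsProbabilityMeasure ν] (i : ι) {f : ℝ → ℝ}
    (hf : Continuous f) : ∫ z, f (z i) ∂(Measure.pi fun _ : ι => ν) = ∫ x, f x ∂ν := by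
  have h := measurePreserving_eval (fun _ : ι => ν) i
  conv_rhs => rw [← h.map_eq]
  rw [integral_map h.measurable.aemeasurable hf.aestronglyMeasurable]

/-- For a product of symmetric laws of variance one, convexity gives
`E ‖z‖^{2k} ≤ d^k E x^{2k}`. -/
lemma avg_bounds_pi [AddCommGroup ι] (ν : Measure ℝ) [IsProbabilityMeasure ν]
    (hneg : ν.map (fun x => -x) = ν) (hint : ∀ n : ℕ, Integrable (fun x : ℝ => x ^ n) ν)
    (h2 : ∫ x, x ^ 2 ∂ν = 1) {k : ℕ} (hk : 1 ≤ k) {N C : ℝ} (hN : N = Fintype.card ι)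
    (hC : 3 * ∫ x, x ^ (2 * k) ∂ν ≤ C) :
    1 / N ≤ ∫ z, avg k N z ∂(Measure.pi fun _ : ι => ν) ∧
      ∫ z, avg k N z ∂(Measure.pi fun _ : ι => ν) ≤ C / N := by
  have h := signSymm_pi (ι := ι) ν hneg hint
  have hN0 : 0 < N := by rw [hN]; exact_mod_cast Fintype.card_pos
  have hi : ∀ (i : ι) (n : ℕ), Integrable (fun z : ι → ℝ => z i ^ n)
      (Measure.pi fun _ : ι => ν) := fun i n => by
    simpa using h.integrable_eval (MvPolynomial.X i ^ n)
  refine h.avg_bounds hk hN0 ?_ ?_ hC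
  · unfold normSq
    rw [integral_finsetSum _ fun i _ => hi i 2]
    simp [integral_pi_eval ν _ (f := fun x => x ^ 2) (by fun_prop), h2, hN]
  · obtain ⟨n, rfl⟩ : ∃ n, k = n + 1 := ⟨k - 1, by omega⟩
    have hp : ∀ z : ι → ℝ, normSq z ^ (n + 1) ≤ N ^ n * ∑ i, z i ^ (2 * (n + 1)) := fun z => by
      have := pow_sum_div_card_le_sum_pow (s := Finset.univ) (f := fun i => z i ^ 2)
        (fun i _ => sq_nonneg (z i)) n
      rw [Finset.card_univ, ← hN, div_le_iff₀ (pow_pos hN0 n)] at this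
      simpa only [normSq, pow_mul, mul_comm (N ^ n)] using this
    refine (integral_mono (h.integrable_normSq_pow _)
      ((integrable_finsetSum _ fun i _ => hi i _).const_mul _) hp).trans (le_of_eq ?_)
    rw [integral_const_mul, integral_finsetSum _ fun i _ => hi i _]
    simp only [integral_pi_eval ν _ (f := fun x => x ^ (2 * (n + 1))) (by fun_prop)]
    rw [Finset.sum_const, Finset.card_univ, nsmul_eq_mul, ← hN]
    ring

lemma isProbabilityMeasure_rademacher :
    IsProbabilityMeasure ((2 : ENNReal)⁻¹ • (Measure.dirac (1 : ℝ) + Measure.dirac (-1 : ℝ))) := by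
  constructor
  simp only [Measure.smul_apply, Measure.add_apply, measure_univ, smul_eq_mul]
  rw [one_add_one_eq_two]
  exact ENNReal.inv_mul_cancel (by norm_num) (by norm_num)

lemma integral_rademacher_pow (n : ℕ) :
    ∫ x, x ^ (2 * n) ∂((2 : ENNReal)⁻¹ • (Measure.dirac (1 : ℝ) + Measure.dirac (-1 : ℝ))) = 1 := by
  rw [integral_smul_measure, integral_add_measure (integrable_dirac (by simp))
    (integrable_dirac (by simp))]
  simp [pow_mul]
  norm_num

lemma avg_bounds_cube [AddCommGroup ι] {k : ℕ} (hk : 1 ≤ k) {N C : ℝ} (hN : N = Fintype.card ι)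
    (hC : 3 ≤ C) :
    1 / N ≤ ∫ z, avg k N z ∂(cubeUniformI ι) ∧ ∫ z, avg k N z ∂(cubeUniformI ι) ≤ C / N := by
  have := isProbabilityMeasure_rademacher
  refine avg_bounds_pi _ ?_ ?_ (integral_rademacher_pow 1) hk hN ?_
  · rw [Measure.map_smul, Measure.map_add _ _ measurable_neg, Measure.map_dirac' measurable_neg,
      Measure.map_dirac' measurable_neg, neg_neg, add_comm]
  · intro n
    refine Integrable.smul_measure ?_ (by norm_num)
    exact (integrable_dirac (by simp)).add_measure (integrable_dirac (by simp))
  · rw [integral_rademacher_pow]; linarith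

lemma avg_bounds_gaussian [AddCommGroup ι] {k : ℕ} (hk : 1 ≤ k) {N C : ℝ}
    (hN : N = Fintype.card ι) (hC : 3 * ∫ x, x ^ (2 * k) ∂(gaussianReal 0 1) ≤ C) :
    1 / N ≤ ∫ z, avg k N z ∂(stdGaussianI ι) ∧ ∫ z, avg k N z ∂(stdGaussianI ι) ≤ C / N := by
  refine avg_bounds_pi _ ?_ ?_ ?_ hk hN hC
  · simpa using gaussianReal_map_neg (μ := 0) (v := 1)
  · intro n
    have := (memLp_id_gaussianReal (μ := 0) (v := 1) n).integrable_norm_pow'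
    refine this.mono' (by fun_prop) (.of_forall fun x => ?_)
    simp
  · have := variance_id_gaussianReal (μ := 0) (v := 1)
    rw [variance_of_integral_eq_zero (by fun_prop) (by simp)] at this
    simpa using this

/-! ### The sphere -/

/-- On the sphere `‖z‖² = N` almost surely, and coordinate reflections are orthogonal. -/
lemma avg_bounds_sphere [AddCommGroup ι] {k : ℕ} (hk : 1 ≤ k) {N C : ℝ} (hN : N = Fintype.card ι)
    (hC : 3 ≤ C) {μ : Measure (ι → ℝ)} (hμ : IsUniformOnSphereI ι (Real.sqrt N) μ) :
    1 / N ≤ ∫ z, avg k N z ∂μ ∧ ∫ z, avg k N z ∂μ ≤ C / N := by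
  obtain ⟨hprob, hsupp, horth⟩ := hμ
  have hN0 : 0 < N := by rw [hN]; exact_mod_cast Fintype.card_pos
  have hae : ∀ᵐ z ∂μ, normSq z = N := by
    rw [Real.sq_sqrt hN0.le] at hsupp
    exact hsupp
  have hint : ∀ n : ℕ, ∫ z, normSq z ^ n ∂μ = N ^ n := fun n => by
    rw [integral_congr_ae (g := fun _ => N ^ n) (by filter_upwards [hae] with z hz; rw [hz])]
    simp
  have h : SignSymm μ :=
    { flip := fun i => by
        refine ⟨measurable_pi_lambda _ fun j => ?_, ?_⟩
        · by_cases hj : j = i <;> simp only [SignSymmetric.flip, hj, if_true, if_false] <;> fun_prop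
        let T : (ι → ℝ) →ₗ[ℝ] (ι → ℝ) :=
          { toFun := SignSymmetric.flip i
            map_add' := fun x y => by
              ext j; by_cases hj : j = i <;> simp [SignSymmetric.flip, hj]; ring
            map_smul' := fun c x => by
              ext j; by_cases hj : j = i <;> simp [SignSymmetric.flip, hj] }
        refine horth T fun x y => Finset.sum_congr rfl fun j _ => ?_
        by_cases hj : j = i <;> simp [T, SignSymmetric.flip, hj]
      integrable := fun s => by
        refine Integrable.of_bound (Continuous.aestronglyMeasurable (by fun_prop))
          (∏ i, Real.sqrt N ^ s i) ?_
        filter_upwards [hae] with z hz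
        rw [Real.norm_eq_abs, Finset.abs_prod]
        refine Finset.prod_le_prod (fun _ _ => abs_nonneg _) fun i _ => ?_
        rw [abs_pow]
        refine pow_le_pow_left₀ (abs_nonneg _) (Real.abs_le_sqrt ?_) _
        rw [← hz]
        exact Finset.single_le_sum (f := fun i => z i ^ 2) (fun _ _ => sq_nonneg _)
          (Finset.mem_univ i) }
  exact h.avg_bounds hk hN0 (by simpa using hint 1) (M := 1) (by rw [hint, one_mul])
    (by linarith)

end Measures

/-- **Group averages of powered overlaps have mean of order `1/d`.**
For `G_d ∈ {Cyc_d, Cyc2D_{d₁,d₂}}` and any fixed `k ≥ 1`, there are constants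
`0 < c ≤ C` and `d₀` such that for all admissible `d ≥ d₀`,
`c/d ≤ E[F_k] ≤ C/d` where the expectation is with respect to `z ~ N(0,I_d)`,
`θ ~ Unif(Q^d)`, or `θ ~ Unif(S^{d-1}(√d))`. -/
theorem mean_Fk_order_one_over_d (k : ℕ) (hk : 1 ≤ k) :
    ∃ c C : ℝ, 0 < c ∧ c ≤ C ∧ ∃ d₀ : ℕ,
      (∀ d : ℕ, d₀ ≤ d →
        (c / d ≤ ∫ z, Fcyc k d z ∂(stdGaussianI (Fin d)) ∧
          ∫ z, Fcyc k d z ∂(stdGaussianI (Fin d)) ≤ C / d) ∧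
        (c / d ≤ ∫ θ, Fcyc k d θ ∂(cubeUniformI (Fin d)) ∧
          ∫ θ, Fcyc k d θ ∂(cubeUniformI (Fin d)) ≤ C / d) ∧
        (∀ μ : Measure (Fin d → ℝ), IsUniformOnSphereI (Fin d) (Real.sqrt d) μ →
          c / d ≤ ∫ θ, Fcyc k d θ ∂μ ∧ ∫ θ, Fcyc k d θ ∂μ ≤ C / d)) ∧
      (∀ d₁ d₂ : ℕ, d₀ ≤ d₁ * d₂ →
        (c / (d₁ * d₂) ≤ ∫ z, Fcyc2 k d₁ d₂ z ∂(stdGaussianI (Fin d₁ × Fin d₂)) ∧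
          ∫ z, Fcyc2 k d₁ d₂ z ∂(stdGaussianI (Fin d₁ × Fin d₂)) ≤ C / (d₁ * d₂)) ∧
        (c / (d₁ * d₂) ≤ ∫ θ, Fcyc2 k d₁ d₂ θ ∂(cubeUniformI (Fin d₁ × Fin d₂)) ∧
          ∫ θ, Fcyc2 k d₁ d₂ θ ∂(cubeUniformI (Fin d₁ × Fin d₂)) ≤ C / (d₁ * d₂)) ∧
        (∀ μ : Measure (Fin d₁ × Fin d₂ → ℝ),
          IsUniformOnSphereI (Fin d₁ × Fin d₂) (Real.sqrt (d₁ * d₂)) μ →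
          c / (d₁ * d₂) ≤ ∫ θ, Fcyc2 k d₁ d₂ θ ∂μ ∧
            ∫ θ, Fcyc2 k d₁ d₂ θ ∂μ ≤ C / (d₁ * d₂))) := by
  set M := ∫ x, x ^ (2 * k) ∂(gaussianReal 0 1) with hM
  have h3 : (3 : ℝ) ≤ 3 * max 1 M := by linarith [le_max_left 1 M]
  have hG : 3 * M ≤ 3 * max 1 M := by linarith [le_max_right 1 M]
  refine ⟨1, 3 * max 1 M, one_pos, by linarith, 1, fun d hd => ?_, fun d₁ d₂ hd => ?_⟩
  -- For nonzero dimensions the addition of `Fin` is that of a cyclic group, so `avg` applies.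
  · have : NeZero d := ⟨by omega⟩
    have hN : (d : ℝ) = Fintype.card (Fin d) := by simp
    have hF : Fcyc k d = SignSymmetric.avg k (d : ℝ) := rfl
    rw [hF]
    exact ⟨avg_bounds_gaussian hk hN hG, avg_bounds_cube hk hN h3,
      fun μ hμ => avg_bounds_sphere hk hN h3 hμ⟩
  · have : NeZero d₁ := ⟨by rintro rfl; simp at hd⟩
    have : NeZero d₂ := ⟨by rintro rfl; simp at hd⟩
    have hN : (d₁ * d₂ : ℝ) = Fintype.card (Fin d₁ × Fin d₂) := by simp
    have hF : Fcyc2 k d₁ d₂ = SignSymmetric.avg k (d₁ * d₂ : ℝ) := rfl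
    rw [hF]
    exact ⟨avg_bounds_gaussian hk hN hG, avg_bounds_cube hk hN h3,
      fun μ hμ => avg_bounds_sphere hk hN h3 hμ⟩
end

section
/- Let d = 2K+1 be odd. For u ∈ [0,1] let g_u ∈ O(d) be the orthogonal map defined by (g_u z)_1 = z_1 and, for each j = 1,…,K, (g_u z)_{2j} = cos(2πju)·z_{2j} + sin(2πju)·z_{2j+1} and (g_u z)_{2j+1} = −sin(2πju)·z_{2j} + cos(2πju)·z_{2j+1}. Define F_k(z) = ∫_0^1 (⟨z, g_u·z⟩/d)^k du. Then for any fixed integer k ≥ 1 there exist constants 0 < c ≤ C < ∞ (depending only on k) and d₀ such that c/d ≤ E_{z~N(0,I_d)}[F_k(z)] ≤ C/d for all odd d ≥ d₀. -/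
/-! The expansion of `F_k` in the coefficients `a_0 = z_1²`, `a_j = z_{2j}² + z_{2j+1}²` is a
polynomial whose coefficients are the cosine moments `∫₀¹ ∏ᵢ cos (2π pᵢ u) du`, indexed by tuples
`p ∈ {0, …, K}ᵏ`. Such a moment equals `2⁻ᵏ` times the number of sign patterns `ε` with
`∑ᵢ εᵢ pᵢ = 0` (`cosMoment_eq`), so it is nonnegative, and no cancellation occurs even for odd `k`.

The Gaussian mean of `∏ᵢ a_{pᵢ}` lies between `1` and a constant depending only on `k`: from above,
a product is at most the sum of the `k`-th powers; from below, keep one squared coordinate of each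
`a_j`, use independence, and bound each even moment `E[x^{2n}]` below by `1` with Bernoulli's
inequality (`one_le_integral_prod_coeff`).

Hence `d^k E[F_k]` is comparable to `∑_p ∫₀¹ ∏ᵢ cos (2π pᵢ u) du`, that is, to the number of
solutions of `∑ᵢ εᵢ pᵢ = 0`, which has order `K^{k-1}`: all the unknowns but the first determine
the first one, and conversely `p₀ = p₁ + ⋯ + p_{k-1}` is solvable for every choice of
`p₁, …, p_{k-1} ≤ K / k`. -/

open MeasureTheory ProbabilityTheory

/-- The standard Gaussian measure `N(0, I_d)` on `ℝ^d`. -/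
noncomputable def stdGaussian (d : ℕ) : Measure (Fin d → ℝ) :=
  Measure.pi fun _ => gaussianReal 0 1

/-- `⟨z, g_u z⟩` for the translation `g_u` acting on band-limited signals:
`⟨z, g_u z⟩ = z₁² + ∑_{j=1}^K (z_{2j}² + z_{2j+1}²) cos(2πju)` (with 1-based
coordinate indexing, here written with 0-based `Fin (2K+1)` indices). -/
noncomputable def shiftOverlap (K : ℕ) (z : Fin (2 * K + 1) → ℝ) (u : ℝ) : ℝ :=
  z ⟨0, by omega⟩ ^ 2 +
    ∑ j : Fin K,
      (z ⟨2 * (j : ℕ) + 1, by omega⟩ ^ 2 + z ⟨2 * (j : ℕ) + 2, by omega⟩ ^ 2) *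
        Real.cos (2 * Real.pi * ((j : ℕ) + 1) * u)

/-- `F_k(z) = ∫_0^1 (⟨z, g_u·z⟩/d)^k du` for the continuous translation group acting on
band-limited signals in dimension `d = 2K+1`. -/
noncomputable def Fband (k K : ℕ) (z : Fin (2 * K + 1) → ℝ) : ℝ :=
  ∫ u in (0 : ℝ)..1, (shiftOverlap K z u / (2 * K + 1)) ^ k

namespace FbandMean

/-! ### Cosine moments and counting -/

/-- The sign `±1` encoded by a Boolean (`true` is `+1`). -/
def sgn (b : Bool) : ℤ := if b then 1 else -1

/-- The signed sum `∑ᵢ εᵢ pᵢ`. -/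
def signedSum {k K : ℕ} (p : Fin k → Fin (K + 1)) (ε : Fin k → Bool) : ℤ :=
  ∑ i, sgn (ε i) * ((p i : ℕ) : ℤ)

/-- The moment `∫₀¹ ∏ᵢ cos (2π pᵢ u) du`. -/
noncomputable def cosMoment {k K : ℕ} (p : Fin k → Fin (K + 1)) : ℝ :=
  ∫ u in (0 : ℝ)..1, ∏ i, Real.cos (2 * Real.pi * ((p i : ℕ) : ℝ) * u)

lemma prod_cos {k : ℕ} (θ : Fin k → ℝ) :
    ∏ i, Real.cos (θ i) =
      (1 / 2) ^ k * ∑ ε : Fin k → Bool, Real.cos (∑ i, (sgn (ε i) : ℝ) * θ i) := by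
  have h1 : ∀ i, Complex.cos (θ i) =
      ∑ b : Bool, (1 / 2) * Complex.exp (((sgn b * θ i : ℝ) : ℂ) * Complex.I) := by
    intro i
    rw [Fintype.sum_bool, Complex.cos]
    simp [sgn]
    ring
  have h2 : ((∏ i, Real.cos (θ i) : ℝ) : ℂ) = (((1 / 2) ^ k : ℝ) : ℂ) *
      ∑ ε : Fin k → Bool, Complex.exp (((∑ i, (sgn (ε i) : ℝ) * θ i : ℝ) : ℂ) * Complex.I) := by
    push_cast
    simp_rw [h1]
    rw [Finset.prod_univ_sum, Finset.mul_sum]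
    refine Finset.sum_congr (by simp only [Fintype.piFinset_univ]) fun ε _ => ?_
    rw [Finset.prod_mul_distrib, ← Complex.exp_sum, Finset.sum_mul]
    simp
  have h3 := congrArg Complex.re h2
  rw [Complex.ofReal_re, Complex.re_ofReal_mul, Complex.re_sum] at h3
  simp_rw [Complex.exp_ofReal_mul_I_re] at h3
  exact h3

lemma integral_cos_int (n : ℤ) :
    ∫ u in (0 : ℝ)..1, Real.cos (2 * Real.pi * n * u) = if n = 0 then 1 else 0 := by
  split_ifs with h
  · simp [h]
  · have h0 : (2 * Real.pi * n : ℝ) ≠ 0 := by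
      have : (n : ℝ) ≠ 0 := by exact_mod_cast h
      positivity
    rw [intervalIntegral.integral_comp_mul_left (fun x => Real.cos x) h0]
    have : Real.sin (2 * Real.pi * n) = 0 := by
      have := Real.sin_int_mul_pi (2 * n)
      rw [← this]; congr 1; push_cast; ring
    simp [this]

lemma cosMoment_eq {k K : ℕ} (p : Fin k → Fin (K + 1)) :
    cosMoment p = (1 / 2) ^ k * ∑ ε : Fin k → Bool, if signedSum p ε = 0 then (1 : ℝ) else 0 := by
  unfold cosMoment
  simp_rw [prod_cos]
  rw [intervalIntegral.integral_const_mul, intervalIntegral.integral_finsetSum]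
  · congr 1
    refine Finset.sum_congr rfl fun ε _ => ?_
    rw [← integral_cos_int]
    congr 1
    ext u
    congr 1
    unfold signedSum
    push_cast
    rw [Finset.mul_sum, Finset.sum_mul]
    exact Finset.sum_congr rfl fun i _ => by ring
  · intro ε _
    apply Continuous.intervalIntegrable
    fun_prop

lemma cosMoment_nonneg {k K : ℕ} (p : Fin k → Fin (K + 1)) : 0 ≤ cosMoment p := by
  rw [cosMoment_eq]
  refine mul_nonneg (by positivity) (Finset.sum_nonneg fun ε _ => ?_)
  split_ifs <;> norm_num

lemma card_signedSum_le (m K : ℕ) (ε : Fin (m + 1) → Bool) :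
    (Finset.univ.filter fun p : Fin (m + 1) → Fin (K + 1) => signedSum p ε = 0).card
      ≤ (K + 1) ^ m := by
  have h : (Finset.univ : Finset (Fin m → Fin (K + 1))).card = (K + 1) ^ m := by simp
  rw [← h]
  refine Finset.card_le_card_of_injOn (fun p => Fin.tail p) (by simp) ?_
  intro p hp q hq hpq
  have hp' : signedSum p ε = 0 := by simpa using hp
  have hq' : signedSum q ε = 0 := by simpa using hq
  have ht : ∀ i : Fin m, p i.succ = q i.succ := fun i => congrFun hpq i
  unfold signedSum at hp' hq'
  rw [Fin.sum_univ_succ] at hp' hq'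
  simp_rw [ht] at hp'
  have h0 : sgn (ε 0) * ((p 0 : ℕ) : ℤ) = sgn (ε 0) * ((q 0 : ℕ) : ℤ) := by linarith
  have h1 : (p 0 : ℕ) = q 0 := by
    unfold sgn at h0
    split_ifs at h0 <;> omega
  funext i
  refine Fin.cases (Fin.ext h1) ht i

lemma sum_cosMoment_le (m K : ℕ) :
    ∑ p : Fin (m + 1) → Fin (K + 1), cosMoment p ≤ ((K : ℝ) + 1) ^ m := by
  simp_rw [cosMoment_eq]
  rw [← Finset.mul_sum, Finset.sum_comm]
  have : ∑ ε : Fin (m + 1) → Bool, ∑ p : Fin (m + 1) → Fin (K + 1),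
      (if signedSum p ε = 0 then (1 : ℝ) else 0)
      ≤ ∑ ε : Fin (m + 1) → Bool, ((K : ℝ) + 1) ^ m := by
    refine Finset.sum_le_sum fun ε _ => ?_
    rw [Finset.sum_boole]
    exact_mod_cast card_signedSum_le m K ε
  calc _ ≤ (1 / 2 : ℝ) ^ (m + 1) * ∑ ε : Fin (m + 1) → Bool, ((K : ℝ) + 1) ^ m := by gcongr
    _ = ((K : ℝ) + 1) ^ m := by
      simp only [Finset.sum_const, Finset.card_univ, Fintype.card_fun, Fintype.card_bool,
        Fintype.card_fin, nsmul_eq_mul]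
      push_cast
      rw [← mul_assoc, ← mul_pow]
      norm_num

/-- The tuple `(q₁ + ⋯ + q_m, q₁, …, q_m)`; the bound on the entries of `q` keeps its first entry
in range. -/
def solution {m K : ℕ} (q : Fin m → Fin (K / (m + 1) + 1)) : Fin (m + 1) → Fin (K + 1) :=
  Fin.cons ⟨∑ i, (q i : ℕ), by
    have h : ∑ i, (q i : ℕ) ≤ ∑ _i : Fin m, K / (m + 1) :=
      Finset.sum_le_sum fun i _ => Nat.lt_succ_iff.1 (q i).2
    have h2 := Nat.mul_div_le K (m + 1)
    simp only [Finset.sum_const, Finset.card_univ, Fintype.card_fin, smul_eq_mul] at h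
    nlinarith⟩
  fun i => ⟨q i, lt_of_lt_of_le (q i).2 (Nat.succ_le_succ (Nat.div_le_self _ _))⟩

lemma solution_injective {m K : ℕ} :
    Function.Injective (solution : (Fin m → Fin (K / (m + 1) + 1)) → _) := by
  intro q r h
  funext i
  have := congrFun h i.succ
  simp only [solution, Fin.cons_succ, Fin.mk.injEq] at this
  exact Fin.ext this

lemma le_cosMoment_solution {m K : ℕ} (q : Fin m → Fin (K / (m + 1) + 1)) :
    (1 / 2 : ℝ) ^ (m + 1) ≤ cosMoment (solution q) := by
  rw [cosMoment_eq]
  refine le_mul_of_one_le_right (by positivity) ?_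
  have hs : signedSum (solution q) (Fin.cons false fun _ => true) = 0 := by
    unfold signedSum
    rw [Fin.sum_univ_succ]
    simp [solution, sgn]
  calc (1 : ℝ) = if signedSum (solution q) (Fin.cons false fun _ => true) = 0 then 1 else 0 := by
        rw [if_pos hs]
    _ ≤ _ := Finset.single_le_sum
        (f := fun ε => if signedSum (solution q) ε = 0 then (1 : ℝ) else 0)
        (fun ε _ => by split_ifs <;> norm_num) (Finset.mem_univ _)

lemma le_sum_cosMoment (m K : ℕ) :
    (1 / 2 : ℝ) ^ (m + 1) * (((K : ℝ) + 1) / (m + 1)) ^ m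
      ≤ ∑ p : Fin (m + 1) → Fin (K + 1), cosMoment p := by
  have hL : ((K : ℝ) + 1) / (m + 1) ≤ ((K / (m + 1) : ℕ) : ℝ) + 1 := by
    rw [div_le_iff₀ (by positivity)]
    have := Nat.lt_mul_div_succ K (Nat.succ_pos m)
    have h : K + 1 ≤ (K / (m + 1) + 1) * (m + 1) := by
      rw [mul_comm]; exact this
    exact_mod_cast h
  calc (1 / 2 : ℝ) ^ (m + 1) * (((K : ℝ) + 1) / (m + 1)) ^ m
      ≤ (1 / 2 : ℝ) ^ (m + 1) * (((K / (m + 1) : ℕ) : ℝ) + 1) ^ m := by gcongr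
    _ = ∑ q : Fin m → Fin (K / (m + 1) + 1), (1 / 2 : ℝ) ^ (m + 1) := by
      simp [mul_comm]
    _ ≤ ∑ q : Fin m → Fin (K / (m + 1) + 1), cosMoment (solution q) :=
      Finset.sum_le_sum fun q _ => le_cosMoment_solution q
    _ = ∑ p ∈ Finset.univ.image (solution (m := m) (K := K)), cosMoment p :=
      (Finset.sum_image fun _ _ _ _ h => solution_injective h).symm
    _ ≤ _ := Finset.sum_le_sum_of_subset_of_nonneg (Finset.subset_univ _)
      fun p _ _ => cosMoment_nonneg p

/-! ### Expansion of `F_k` -/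

/-- The coefficient of `cos (2πju)` in `⟨z, g_u z⟩`: the energy of `z` at frequency `j`. -/
noncomputable def coeff (K : ℕ) (z : Fin (2 * K + 1) → ℝ) (j : Fin (K + 1)) : ℝ :=
  Fin.cases (motive := fun _ => ℝ) (z ⟨0, by omega⟩ ^ 2)
    (fun j : Fin K =>
      z ⟨2 * (j : ℕ) + 1, by omega⟩ ^ 2 + z ⟨2 * (j : ℕ) + 2, by omega⟩ ^ 2) j

lemma shiftOverlap_eq (K : ℕ) (z : Fin (2 * K + 1) → ℝ) (u : ℝ) :
    shiftOverlap K z u =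
      ∑ j : Fin (K + 1), coeff K z j * Real.cos (2 * Real.pi * ((j : ℕ) : ℝ) * u) := by
  rw [Fin.sum_univ_succ]
  simp [shiftOverlap, coeff]

lemma Fband_eq (k K : ℕ) (z : Fin (2 * K + 1) → ℝ) :
    Fband k K z = (1 / (2 * K + 1)) ^ k *
      ∑ p : Fin k → Fin (K + 1), cosMoment p * ∏ i, coeff K z (p i) := by
  have h : ∀ u, (shiftOverlap K z u / (2 * K + 1)) ^ k = (1 / (2 * K + 1)) ^ k *
      ∑ p : Fin k → Fin (K + 1),
        (∏ i, Real.cos (2 * Real.pi * ((p i : ℕ) : ℝ) * u)) * ∏ i, coeff K z (p i) := by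
    intro u
    rw [div_eq_mul_one_div, mul_pow, mul_comm, shiftOverlap_eq, Fintype.sum_pow]
    congr 1
    refine Finset.sum_congr rfl fun p _ => ?_
    rw [Finset.prod_mul_distrib, mul_comm]
  unfold Fband
  simp_rw [h]
  rw [intervalIntegral.integral_const_mul, intervalIntegral.integral_finsetSum]
  · simp_rw [intervalIntegral.integral_mul_const]
    rfl
  · intro p _
    apply Continuous.intervalIntegrable
    fun_prop

/-- Both coordinates are `z_1` when `j = 0`. -/
lemma exists_coord (K : ℕ) (j : Fin (K + 1)) : ∃ a b : Fin (2 * K + 1),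
    ∀ z, z a ^ 2 ≤ coeff K z j ∧ coeff K z j ≤ z a ^ 2 + z b ^ 2 := by
  refine Fin.cases ⟨⟨0, by omega⟩, ⟨0, by omega⟩, fun z => ⟨le_rfl, ?_⟩⟩ (fun j => ?_) j
  · exact le_add_of_nonneg_right (sq_nonneg _)
  · exact ⟨⟨2 * (j : ℕ) + 1, by omega⟩, ⟨2 * (j : ℕ) + 2, by omega⟩, fun z =>
      ⟨le_add_of_nonneg_right (sq_nonneg _), le_rfl⟩⟩

lemma coeff_nonneg (K : ℕ) (z : Fin (2 * K + 1) → ℝ) (j : Fin (K + 1)) : 0 ≤ coeff K z j := by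
  obtain ⟨a, b, h⟩ := exists_coord K j
  exact (sq_nonneg _).trans (h z).1

lemma continuous_coeff (K : ℕ) (j : Fin (K + 1)) : Continuous fun z => coeff K z j := by
  refine Fin.cases ?_ (fun j => ?_) j
  · change Continuous fun z : Fin (2 * K + 1) → ℝ => z ⟨0, by omega⟩ ^ 2
    fun_prop
  · change Continuous fun z : Fin (2 * K + 1) → ℝ =>
      z ⟨2 * (j : ℕ) + 1, by omega⟩ ^ 2 + z ⟨2 * (j : ℕ) + 2, by omega⟩ ^ 2
    fun_prop

/-! ### Gaussian moments -/

instance (d : ℕ) : IsProbabilityMeasure (stdGaussian d) := by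
  unfold _root_.stdGaussian; infer_instance

lemma integrable_pow_gaussian (n : ℕ) : Integrable (fun x : ℝ => x ^ n) (gaussianReal 0 1) := by
  have h : MemLp (id : ℝ → ℝ) n (gaussianReal 0 1) := memLp_id_gaussianReal' n (by simp)
  refine h.integrable_norm_pow'.mono' (by fun_prop) (Filter.Eventually.of_forall fun x => ?_)
  simp

/-- The Gaussian moment `E[x^{2n}]`. -/
noncomputable def evenMoment (n : ℕ) : ℝ := ∫ x, (x ^ 2) ^ n ∂(gaussianReal 0 1)

lemma integrable_even (n : ℕ) : Integrable (fun x : ℝ => (x ^ 2) ^ n) (gaussianReal 0 1) := by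
  simp_rw [← pow_mul]
  exact integrable_pow_gaussian _

lemma evenMoment_nonneg (n : ℕ) : 0 ≤ evenMoment n :=
  integral_nonneg fun x => by positivity

lemma one_le_evenMoment (n : ℕ) : 1 ≤ evenMoment n := by
  have h1 : ∫ x, x ^ 2 ∂(gaussianReal 0 1) = 1 := by
    have h := variance_of_integral_eq_zero (X := fun x : ℝ => x) (μ := gaussianReal 0 1)
      (by fun_prop) (by simp)
    rw [variance_fun_id_gaussianReal] at h
    simpa using h.symm
  have hi : Integrable (fun x : ℝ => x ^ 2) (gaussianReal 0 1) := integrable_pow_gaussian 2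
  have h2 : ∫ x : ℝ, (1 + (n : ℝ) * (x ^ 2 - 1)) ∂(gaussianReal 0 1) = 1 := by
    have hi' : Integrable (fun x : ℝ => (n : ℝ) * (x ^ 2 - 1)) (gaussianReal 0 1) :=
      (hi.sub (integrable_const _)).const_mul _
    rw [integral_add (integrable_const _) hi',
      integral_const_mul, integral_sub hi (integrable_const _), h1]
    simp
  rw [← h2]
  refine integral_mono ((integrable_const _).add ((hi.sub (integrable_const _)).const_mul _))
    (integrable_even n) fun x => ?_
  have := one_add_mul_le_pow (a := x ^ 2 - 1) (by nlinarith [sq_nonneg x]) n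
  simpa using this

lemma integrable_coord (d n : ℕ) (a : Fin d) :
    Integrable (fun z : Fin d → ℝ => (z a ^ 2) ^ n) (stdGaussian d) :=
  (measurePreserving_eval (fun _ : Fin d => gaussianReal 0 1) a).integrable_comp_of_integrable
    (integrable_even n)

lemma integral_coord (d n : ℕ) (a : Fin d) :
    ∫ z, (z a ^ 2) ^ n ∂(stdGaussian d) = evenMoment n := by
  have h := measurePreserving_eval (fun _ : Fin d => gaussianReal 0 1) a
  unfold evenMoment
  rw [← h.map_eq, integral_map h.measurable.aemeasurable (by fun_prop)]
  rfl

lemma coeff_pow_le (m K : ℕ) (j : Fin (K + 1)) : ∃ a b : Fin (2 * K + 1), ∀ z,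
    coeff K z j ^ (m + 1) ≤ 2 ^ m * ((z a ^ 2) ^ (m + 1) + (z b ^ 2) ^ (m + 1)) := by
  obtain ⟨a, b, h⟩ := exists_coord K j
  refine ⟨a, b, fun z => (pow_le_pow_left₀ (coeff_nonneg K z j) (h z).2 _).trans ?_⟩
  simpa using add_pow_le (sq_nonneg (z a)) (sq_nonneg (z b)) (m + 1)

lemma integrable_coeff_pow (m K : ℕ) (j : Fin (K + 1)) :
    Integrable (fun z => coeff K z j ^ (m + 1)) (stdGaussian (2 * K + 1)) := by
  obtain ⟨a, b, h⟩ := coeff_pow_le m K j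
  refine (((integrable_coord _ (m + 1) a).add (integrable_coord _ (m + 1) b)).const_mul
    (2 ^ m)).mono' ((continuous_coeff K j).pow _).aestronglyMeasurable
    (Filter.Eventually.of_forall fun z => ?_)
  rw [Real.norm_of_nonneg (pow_nonneg (coeff_nonneg _ _ _) _)]
  exact h z

lemma integral_coeff_pow_le (m K : ℕ) (j : Fin (K + 1)) :
    ∫ z, coeff K z j ^ (m + 1) ∂(stdGaussian (2 * K + 1)) ≤
      2 ^ (m + 1) * evenMoment (m + 1) := by
  obtain ⟨a, b, h⟩ := coeff_pow_le m K j
  have ha := integrable_coord (2 * K + 1) (m + 1) a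
  have hb := integrable_coord (2 * K + 1) (m + 1) b
  calc _ ≤ ∫ z, 2 ^ m * ((z a ^ 2) ^ (m + 1) + (z b ^ 2) ^ (m + 1)) ∂(stdGaussian (2 * K + 1)) :=
        integral_mono (integrable_coeff_pow m K j) ((ha.add hb).const_mul _) h
    _ = 2 ^ (m + 1) * evenMoment (m + 1) := by
      rw [integral_const_mul, integral_add ha hb, integral_coord, integral_coord]
      ring

lemma prod_le_sum_pow {k : ℕ} [NeZero k] (x : Fin k → ℝ) (hx : ∀ i, 0 ≤ x i) :
    ∏ i, x i ≤ ∑ i, x i ^ k := by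
  obtain ⟨i₀, -, h⟩ := Finset.exists_max_image Finset.univ x ⟨0, Finset.mem_univ _⟩
  -- The product is at most the `k`-th power of its largest factor.
  calc ∏ i, x i ≤ ∏ _i : Fin k, x i₀ := Finset.prod_le_prod (fun i _ => hx i) h
    _ = x i₀ ^ k := by simp
    _ ≤ _ := Finset.single_le_sum (f := fun i => x i ^ k)
      (fun i _ => pow_nonneg (hx i) _) (Finset.mem_univ i₀)

lemma integrable_prod_coeff {m K : ℕ} (p : Fin (m + 1) → Fin (K + 1)) :
    Integrable (fun z => ∏ i, coeff K z (p i)) (stdGaussian (2 * K + 1)) := by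
  refine (integrable_finsetSum Finset.univ
    fun i _ => integrable_coeff_pow m K (p i)).mono'
    (continuous_finsetProd _ fun i _ => continuous_coeff K (p i)).aestronglyMeasurable
    (Filter.Eventually.of_forall fun z => ?_)
  rw [Real.norm_of_nonneg (Finset.prod_nonneg fun i _ => coeff_nonneg _ _ _)]
  exact prod_le_sum_pow _ fun i => coeff_nonneg _ _ _

lemma integral_prod_coeff_le {m K : ℕ} (p : Fin (m + 1) → Fin (K + 1)) :
    ∫ z, ∏ i, coeff K z (p i) ∂(stdGaussian (2 * K + 1)) ≤
      (m + 1) * (2 ^ (m + 1) * evenMoment (m + 1)) := by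
  have hi := fun i (_ : i ∈ (Finset.univ : Finset (Fin (m + 1)))) =>
    integrable_coeff_pow m K (p i)
  calc _ ≤ ∫ z, ∑ i, coeff K z (p i) ^ (m + 1) ∂(stdGaussian (2 * K + 1)) :=
        integral_mono (integrable_prod_coeff p) (integrable_finsetSum _ hi)
          fun z => prod_le_sum_pow _ fun i => coeff_nonneg _ _ _
    _ = ∑ i, ∫ z, coeff K z (p i) ^ (m + 1) ∂(stdGaussian (2 * K + 1)) :=
        integral_finsetSum _ hi
    _ ≤ ∑ _i : Fin (m + 1), 2 ^ (m + 1) * evenMoment (m + 1) :=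
        Finset.sum_le_sum fun i _ => integral_coeff_pow_le m K (p i)
    _ = _ := by simp

lemma one_le_integral_prod_coeff {m K : ℕ} (p : Fin (m + 1) → Fin (K + 1)) :
    1 ≤ ∫ z, ∏ i, coeff K z (p i) ∂(stdGaussian (2 * K + 1)) := by
  choose a b h using exists_coord K
  -- The multiplicity of each coordinate turns the product into one over independent factors.
  have hprod : ∀ z : Fin (2 * K + 1) → ℝ, ∏ i, z (a (p i)) ^ 2 =
      ∏ l, (z l ^ 2) ^ (Finset.univ.filter fun i => a (p i) = l).card := by
    intro z
    rw [← Finset.prod_fiberwise Finset.univ (fun i => a (p i))]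
    refine Finset.prod_congr rfl fun l _ => ?_
    rw [← Finset.prod_const]
    exact Finset.prod_congr rfl fun i hi => by rw [(Finset.mem_filter.1 hi).2]
  have hval : ∫ z, ∏ i, z (a (p i)) ^ 2 ∂(stdGaussian (2 * K + 1)) =
      ∏ l, evenMoment (Finset.univ.filter fun i => a (p i) = l).card := by
    simp_rw [hprod]
    exact integral_fintype_prod_eq_prod (μ := fun _ => gaussianReal 0 1)
      (f := fun l x => (x ^ 2) ^ (Finset.univ.filter fun i => a (p i) = l).card)
  calc (1 : ℝ) ≤ ∏ l, evenMoment (Finset.univ.filter fun i => a (p i) = l).card :=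
        Finset.prod_induction _ (fun x : ℝ => 1 ≤ x)
          (fun _ _ hx hy => one_le_mul_of_one_le_of_one_le hx hy) le_rfl
          fun l _ => one_le_evenMoment _
    _ = ∫ z, ∏ i, z (a (p i)) ^ 2 ∂(stdGaussian (2 * K + 1)) := hval.symm
    _ ≤ _ := integral_mono_of_nonneg
        (Filter.Eventually.of_forall fun z => Finset.prod_nonneg fun i _ => sq_nonneg _)
        (integrable_prod_coeff p)
        (Filter.Eventually.of_forall fun z =>
          Finset.prod_le_prod (fun i _ => sq_nonneg _) fun i _ => (h (p i) z).1)

lemma integral_Fband (m K : ℕ) :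
    ∫ z, Fband (m + 1) K z ∂(stdGaussian (2 * K + 1)) = (1 / (2 * K + 1)) ^ (m + 1) *
      ∑ p : Fin (m + 1) → Fin (K + 1),
        cosMoment p * ∫ z, ∏ i, coeff K z (p i) ∂(stdGaussian (2 * K + 1)) := by
  simp_rw [Fband_eq]
  rw [integral_const_mul, integral_finsetSum _ fun p _ => (integrable_prod_coeff p).const_mul _]
  simp_rw [integral_const_mul]

lemma Fband_lower (m K : ℕ) :
    (1 / 2 : ℝ) ^ (m + 1) * (1 / (2 * (m + 1))) ^ m / (2 * K + 1) ≤
      ∫ z, Fband (m + 1) K z ∂(stdGaussian (2 * K + 1)) := by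
  rw [integral_Fband]
  have hd : (0 : ℝ) < 2 * K + 1 := by positivity
  have hhalf : 1 / (2 * ((m : ℝ) + 1)) ≤ (1 / (2 * K + 1)) * (((K : ℝ) + 1) / (m + 1)) := by
    rw [div_mul_div_comm, div_le_div_iff₀ (by positivity) (by positivity)]
    nlinarith [Nat.cast_nonneg (α := ℝ) m]
  calc _ ≤ (1 / 2 : ℝ) ^ (m + 1) * ((1 / (2 * K + 1)) * (((K : ℝ) + 1) / (m + 1))) ^ m
        / (2 * K + 1) := by gcongr
    _ = (1 / (2 * K + 1)) ^ (m + 1) *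
        ((1 / 2 : ℝ) ^ (m + 1) * (((K : ℝ) + 1) / (m + 1)) ^ m) := by
      rw [mul_pow]; ring
    _ ≤ (1 / (2 * K + 1)) ^ (m + 1) * ∑ p : Fin (m + 1) → Fin (K + 1), cosMoment p := by
      gcongr
      exact le_sum_cosMoment m K
    _ ≤ _ := by
      refine mul_le_mul_of_nonneg_left (Finset.sum_le_sum fun p _ => ?_) (by positivity)
      exact le_mul_of_one_le_right (cosMoment_nonneg p) (one_le_integral_prod_coeff p)

lemma Fband_upper (m K : ℕ) :
    ∫ z, Fband (m + 1) K z ∂(stdGaussian (2 * K + 1)) ≤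
      (m + 1) * (2 ^ (m + 1) * evenMoment (m + 1)) / (2 * K + 1) := by
  rw [integral_Fband]
  set B : ℝ := (m + 1) * (2 ^ (m + 1) * evenMoment (m + 1)) with hB
  have hB0 : 0 ≤ B := by
    have := evenMoment_nonneg (m + 1)
    positivity
  have hd : (0 : ℝ) < 2 * K + 1 := by positivity
  calc _ ≤ (1 / (2 * K + 1) : ℝ) ^ (m + 1) *
        ∑ p : Fin (m + 1) → Fin (K + 1), cosMoment p * B := by
        refine mul_le_mul_of_nonneg_left (Finset.sum_le_sum fun p _ => ?_) (by positivity)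
        exact mul_le_mul_of_nonneg_left (integral_prod_coeff_le p) (cosMoment_nonneg p)
    _ ≤ (1 / (2 * K + 1) : ℝ) ^ (m + 1) * ((2 * K + 1) ^ m * B) := by
      rw [← Finset.sum_mul]
      gcongr
      refine (sum_cosMoment_le m K).trans ?_
      gcongr
      linarith [Nat.cast_nonneg (α := ℝ) K]
    _ = B / (2 * K + 1) := by
      rw [pow_succ, one_div_pow]
      field_simp

end FbandMean

/-- **Gaussian mean of `F_k` for the band-limited translation group is of order `1/d`.**
For every fixed `k ≥ 1` there are constants `0 < c ≤ C` and `d₀` such that for all odd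
`d = 2K+1 ≥ d₀`, `c/d ≤ E_{z ~ N(0,I_d)}[F_k(z)] ≤ C/d`. -/
theorem mean_Fband_order_one_over_d (k : ℕ) (hk : 1 ≤ k) :
    ∃ c C : ℝ, 0 < c ∧ c ≤ C ∧ ∃ d₀ : ℕ,
      ∀ K : ℕ, d₀ ≤ 2 * K + 1 →
        c / (2 * K + 1) ≤ ∫ z, Fband k K z ∂(stdGaussian (2 * K + 1)) ∧
          ∫ z, Fband k K z ∂(stdGaussian (2 * K + 1)) ≤ C / (2 * K + 1) := by
  obtain ⟨m, rfl⟩ : ∃ m, k = m + 1 := ⟨k - 1, by omega⟩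
  have hc : (0 : ℝ) < (1 / 2 : ℝ) ^ (m + 1) * (1 / (2 * (m + 1))) ^ m := by positivity
  refine ⟨_, max ((1 / 2 : ℝ) ^ (m + 1) * (1 / (2 * (m + 1))) ^ m)
    ((m + 1) * (2 ^ (m + 1) * FbandMean.evenMoment (m + 1))), hc, le_max_left _ _, 0,
    fun K _ => ⟨FbandMean.Fband_lower m K, (FbandMean.Fband_upper m K).trans ?_⟩⟩
  gcongr
  exact le_max_right _ _
end

section
/- Let d = 2K+1 be odd and let Sft_d = {g_u : u ∈ [0,1]} be the compact subgroup of O(d) where (g_u z)_1 = z_1 and, for each j = 1,…,K, g_u rotates the plane spanned by coordinates (2j, 2j+1) by angle 2πju; its Haar measure is ∫_{Sft_d} f(g) π_d(dg) = ∫_0^1 f(g_u) du. Then for any fixed integer k ≥ 1, dim V_{d,k}(Sft_d) = Θ_d(d^{k−1}); that is, there exist constants 0 < c ≤ C < ∞ (depending only on k) and d₀ such that c·d^{k−1} ≤ D(S^{d−1};k) ≤ C·d^{k−1} for all odd d ≥ d₀. -/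
/-!
The proof uses the complex coordinates `w_j = z_{2j} + i z_{2j+1}` and `w_0 = z_1`, on which the
translation `g_u` acts by the character `exp (-2πiju)`. A product of factors `w_j`, `conj w_j` is
an eigenfunction whose weight is the signed sum of its frequencies.

*Upper bound.* A polynomial of degree at most `k` is a combination of products of exactly `k`
functions among `1`, `w_j`, `conj w_j`. Averaging over `u ∈ [0,1]` keeps the products of weight
zero and kills the others (`prod_avg`, `avg_mem`). In a product of weight zero the last factor is
determined, up to two choices, by the others, so there are at most `2 (2d)^(k-1)` of them, and they
span a space containing the independent functions `Y l` (`upper_bound`).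

*Lower bound.* For distinct frequencies `a_1, …, a_{k-1}` and `b = ∑ a_i`, different from all
of them, `Re (w_{a_1} ⋯ w_{a_{k-1}} conj w_b)` is an invariant polynomial of degree `k`. It changes
sign under the rotation by `π` in each of its `k` planes, while a monomial of degree less than `k`
misses one of the planes; hence it is orthogonal to all lower degrees (`orth_of_flip`). Placing
the `a_i` in disjoint blocks of length of order `d` gives order `d^(k-1)` such polynomials, and
evaluation at points supported on the axes of the planes of each of them shows that they are
independent (`lower_bound`). For `k = 2` necessarily `b = a_1`, and the functions
`|w_a|² - 2 z_1²` are used instead (`lower_bound_two`). The cardinality of a linearly independent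
family in `V_k` is at most `D` (`card_le_of_dual`).
-/

open MeasureTheory ProbabilityTheory

/-- The translation `g_u` of the group `Sft_d ≅ SO(2)` acting on band-limited signals in
dimension `d = 2K+1`: it fixes the first coordinate and rotates the plane of coordinates
`(2j, 2j+1)` (1-based indexing) by angle `2πju`, for `j = 1, …, K`. -/
noncomputable def actBand (K : ℕ) (u : ℝ) (z : Fin (2 * K + 1) → ℝ) :
    Fin (2 * K + 1) → ℝ :=
  fun i =>
    if _h0 : i.val = 0 then z i
    else if _h1 : i.val % 2 = 1 then
      Real.cos (2 * Real.pi * (((i.val + 1) / 2 : ℕ) : ℝ) * u) * z i +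
        Real.sin (2 * Real.pi * (((i.val + 1) / 2 : ℕ) : ℝ) * u) * z ⟨i.val + 1, by omega⟩
    else
      -Real.sin (2 * Real.pi * ((i.val / 2 : ℕ) : ℝ) * u) * z ⟨i.val - 1, by omega⟩ +
        Real.cos (2 * Real.pi * ((i.val / 2 : ℕ) : ℝ) * u) * z i

namespace BandLimited

/-! ### The complex coordinates and the sphere -/

/-- The sphere of radius `√d` in `ℝ^d`, `d = 2K+1`. -/
def Sph (K : ℕ) : Set (Fin (2 * K + 1) → ℝ) :=
  {x | ∑ i, x i ^ 2 = ((2 * K + 1 : ℕ) : ℝ)}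

/-- The complex coordinate of frequency `j`: `z_{2j} + i z_{2j+1}` (1-based) for
`1 ≤ j ≤ K`, the fixed real coordinate `z_1` for `j = 0`, and `0` for `j > K`. -/
noncomputable def w {K : ℕ} (j : ℕ) (z : Fin (2 * K + 1) → ℝ) : ℂ :=
  if j = 0 then (z ⟨0, by omega⟩ : ℂ)
  else if h : j ≤ K then (z ⟨2 * j - 1, by omega⟩ : ℂ) + z ⟨2 * j, by omega⟩ * Complex.I
  else 0

/-- The complex coordinates are eigenfunctions of the translations. -/
theorem w_actBand {K : ℕ} (j : ℕ) (u : ℝ) (z : Fin (2 * K + 1) → ℝ) :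
    w j (actBand K u z) = Complex.exp (-(2 * Real.pi * j * u : ℝ) * Complex.I) * w j z := by
  unfold w
  split_ifs with h0 h
  · subst h0
    simp [actBand]
  · have e1 : (2 * j - 1 + 1) / 2 = j := by omega
    have e2 : (2 * j) / 2 = j := by omega
    have e3 : (2 * j - 1) % 2 = 1 := by omega
    have e4 : 2 * j - 1 ≠ 0 := by omega
    have e6 : 2 * j - 1 + 1 = 2 * j := by omega
    rw [← Complex.ofReal_neg, Complex.exp_mul_I, ← Complex.ofReal_cos, ← Complex.ofReal_sin,
      Real.cos_neg, Real.sin_neg]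
    simp only [actBand, e2, e3, e4, e6, h0, Nat.mul_mod_right, dite_true, dite_false,
      mul_eq_zero, or_self, OfNat.ofNat_ne_zero, zero_ne_one]
    push_cast
    ring_nf
    simp only [Complex.I_sq]
    ring
  · simp

theorem continuous_w {K : ℕ} (j : ℕ) : Continuous (w (K := K) j) := by
  unfold w
  split_ifs <;> fun_prop

/-- The Euclidean norm in the complex coordinates. -/
theorem sum_sq_eq {K : ℕ} (x : Fin (2 * K + 1) → ℝ) :
    ∑ i, x i ^ 2 = ∑ j ∈ Finset.range (K + 1), Complex.normSq (w j x) := by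
  have key : ∀ (g : ℕ → ℝ) (n : ℕ), ∑ i ∈ Finset.range (2 * n + 1), g i =
      ∑ j ∈ Finset.range n, (g (2 * j + 1) + g (2 * j + 2)) + g 0 := by
    intro g n
    induction n with
    | zero => simp
    | succ n ih =>
      rw [show 2 * (n + 1) + 1 = 2 * n + 1 + 1 + 1 by ring, Finset.sum_range_succ,
        Finset.sum_range_succ, ih, Finset.sum_range_succ]
      ring
  have h := key (fun i => if h : i < 2 * K + 1 then x ⟨i, h⟩ ^ 2 else 0) K
  rw [← Fin.sum_univ_eq_sum_range] at h
  simp only [Fin.is_lt, dite_true, Fin.eta] at h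
  rw [h, Finset.sum_range_succ']
  congr 1
  · refine Finset.sum_congr rfl fun j hj => ?_
    rw [Finset.mem_range] at hj
    have h1 : 2 * j + 1 < 2 * K + 1 := by omega
    have h2 : 2 * j + 2 < 2 * K + 1 := by omega
    have h3 : j + 1 ≤ K := hj
    simp only [h1, h2, dite_true, w, h3, Nat.add_eq_zero_iff, one_ne_zero, and_false,
      if_false, Complex.normSq_add_mul_I, mul_add, mul_one]
    rfl
  · simp [w, Complex.normSq_ofReal, pow_two]

theorem actBand_mem {K : ℕ} (u : ℝ) {z : Fin (2 * K + 1) → ℝ} (hz : z ∈ Sph K) :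
    actBand K u z ∈ Sph K := by
  simp only [Sph, Set.mem_ofPred_eq, sum_sq_eq] at hz ⊢
  rw [← hz]
  refine Finset.sum_congr rfl fun j _ => ?_
  rw [w_actBand, map_mul, ← Complex.ofReal_neg, Complex.normSq_eq_norm_sq (Complex.exp _),
    Complex.norm_exp_ofReal_mul_I]
  simp

theorem continuous_actBand {K : ℕ} (z : Fin (2 * K + 1) → ℝ) :
    Continuous fun u => actBand K u z := by
  refine continuous_pi fun i => ?_
  unfold actBand
  split_ifs <;> fun_prop

theorem isCompact_Sph (K : ℕ) : IsCompact (Sph K) := by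
  refine Metric.isCompact_of_isClosed_isBounded ?_ ?_
  · exact isClosed_eq (by fun_prop) continuous_const
  · refine (Metric.isBounded_closedBall (x := 0) (r := ((2 * K + 1 : ℕ) : ℝ))).subset ?_
    intro x hx
    rw [mem_closedBall_zero_iff, pi_norm_le_iff_of_nonneg (by positivity)]
    intro i
    have h1 : x i ^ 2 ≤ ∑ i, x i ^ 2 :=
      Finset.single_le_sum (f := fun i => x i ^ 2) (fun _ _ => sq_nonneg _) (Finset.mem_univ i)
    have h2 : ∑ i, x i ^ 2 = ((2 * K + 1 : ℕ) : ℝ) := hx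
    have h3 : (1 : ℝ) ≤ ((2 * K + 1 : ℕ) : ℝ) := by exact_mod_cast Nat.le_add_left 1 _
    rw [Real.norm_eq_abs]
    exact abs_le_of_sq_le_sq (by nlinarith) (by positivity)

/-! ### Integration against the uniform measure, and a bound on `D` from below -/

section Measure

variable {K : ℕ} {μ : Measure (Fin (2 * K + 1) → ℝ)}

theorem ae_mem_Sph (hμ : IsUniformOnSphereI (Fin (2 * K + 1)) (Real.sqrt (2 * K + 1)) μ) :
    ∀ᵐ x ∂μ, x ∈ Sph K := by
  have h := hμ.2.1
  rw [Real.sq_sqrt (by positivity)] at h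
  rw [ae_iff]
  convert h using 2
  simp [Sph]

theorem integrable_of_continuous
    (hμ : IsUniformOnSphereI (Fin (2 * K + 1)) (Real.sqrt (2 * K + 1)) μ)
    {g : (Fin (2 * K + 1) → ℝ) → ℝ} (hg : Continuous g) : Integrable g μ := by
  have := hμ.1
  have h := hg.continuousOn.integrableOn_compact (μ := μ) (isCompact_Sph K)
  rwa [IntegrableOn, Measure.restrict_eq_self_of_ae_mem (ae_mem_Sph hμ)] at h

theorem integral_comp
    (hμ : IsUniformOnSphereI (Fin (2 * K + 1)) (Real.sqrt (2 * K + 1)) μ)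
    (T : (Fin (2 * K + 1) → ℝ) →ₗ[ℝ] (Fin (2 * K + 1) → ℝ))
    (hT : ∀ x y, ∑ i, T x i * T y i = ∑ i, x i * y i)
    {g : (Fin (2 * K + 1) → ℝ) → ℝ} (hg : Continuous g) :
    ∫ x, g (T x) ∂μ = ∫ x, g x ∂μ := by
  have hc : Continuous T := T.continuous_of_finiteDimensional
  conv_rhs => rw [← hμ.2.2 T hT]
  rw [integral_map hc.measurable.aemeasurable hg.aestronglyMeasurable]

theorem integral_eq_zero_of_odd
    (hμ : IsUniformOnSphereI (Fin (2 * K + 1)) (Real.sqrt (2 * K + 1)) μ)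
    (T : (Fin (2 * K + 1) → ℝ) →ₗ[ℝ] (Fin (2 * K + 1) → ℝ))
    (hT : ∀ x y, ∑ i, T x i * T y i = ∑ i, x i * y i)
    {g : (Fin (2 * K + 1) → ℝ) → ℝ} (hg : Continuous g) (hodd : ∀ x, g (T x) = - g x) :
    ∫ x, g x ∂μ = 0 := by
  have h := integral_comp hμ T hT hg
  simp only [hodd, integral_neg] at h
  linarith

/-- Orthogonality to all polynomials of degree `< k` can be tested on monomials. -/
theorem integral_mul_poly_eq_zero
    (hμ : IsUniformOnSphereI (Fin (2 * K + 1)) (Real.sqrt (2 * K + 1)) μ)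
    {f : (Fin (2 * K + 1) → ℝ) → ℝ} (hf : Continuous f) {k : ℕ}
    (h : ∀ e : Fin (2 * K + 1) →₀ ℕ, ∑ i, e i < k → ∫ x, f x * ∏ i, x i ^ e i ∂μ = 0)
    (q : MvPolynomial (Fin (2 * K + 1)) ℝ) (hq : q.totalDegree < k) :
    ∫ x, f x * MvPolynomial.eval x q ∂μ = 0 := by
  simp only [MvPolynomial.eval_eq', Finset.mul_sum]
  rw [integral_finsetSum]
  · refine Finset.sum_eq_zero fun e he => ?_
    have h1 := h e (by
      have := MvPolynomial.le_totalDegree he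
      rw [Finsupp.sum_fintype _ _ (fun _ => rfl)] at this
      omega)
    simp only [mul_left_comm (f _)]
    rw [integral_const_mul, h1, mul_zero]
  · intro e _
    exact integrable_of_continuous hμ (by fun_prop)

/-- A family in `V_k` of invariant functions which is dual, up to nonzero scalars, to a family
of points of the sphere is linearly independent, so it has at most `D` members. -/
theorem card_le_of_dual {k D : ℕ} {Y : Fin D → (Fin (2 * K + 1) → ℝ) → ℝ}
    (hY : IsONBofInvVk μ (Sph K) (actBand K) k D Y)
    {ι : Type} [Fintype ι] (f : ι → (Fin (2 * K + 1) → ℝ) → ℝ)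
    (pt : ι → (Fin (2 * K + 1) → ℝ)) (hpt : ∀ a, pt a ∈ Sph K)
    (hdiag : ∀ a, f a (pt a) ≠ 0) (hoff : ∀ a b, a ≠ b → f a (pt b) = 0)
    (hpoly : ∀ a, ∃ p : MvPolynomial (Fin (2 * K + 1)) ℝ, p.totalDegree ≤ k ∧
      ∀ x, f a x = MvPolynomial.eval x p)
    (hinv : ∀ a u x, f a (actBand K u x) = f a x)
    (horth : ∀ a, ∀ q : MvPolynomial (Fin (2 * K + 1)) ℝ, q.totalDegree < k →
      ∫ x, f a x * MvPolynomial.eval x q ∂μ = 0) :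
    Fintype.card ι ≤ D := by
  have hc : ∀ a, ∃ c : Fin D → ℝ, ∀ x ∈ Sph K, f a x = ∑ l, c l * Y l x := fun a =>
    hY.2.2.2.2 (f a) (by obtain ⟨p, h1, h2⟩ := hpoly a; exact ⟨p, h1, fun x _ => h2 x⟩)
      (fun u x _ => hinv a u x) (horth a)
  choose c hc using hc
  have hli : LinearIndependent ℝ c := by
    rw [Fintype.linearIndependent_iff]
    intro g hg b
    have h1 : ∑ a, g a * f a (pt b) = 0 := by
      simp only [hc _ _ (hpt b), Finset.mul_sum]
      rw [Finset.sum_comm]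
      refine Finset.sum_eq_zero fun l _ => ?_
      have := congrFun hg l
      simp only [Finset.sum_apply, Pi.smul_apply, smul_eq_mul, Pi.zero_apply] at this
      simp only [← mul_assoc]
      rw [← Finset.sum_mul, this, zero_mul]
    rw [Finset.sum_eq_single b (fun a _ hab => by rw [hoff a b hab, mul_zero])
      (fun h => absurd (Finset.mem_univ b) h)] at h1
    exact (mul_eq_zero.mp h1).resolve_right (hdiag b)
  simpa using hli.fintype_card_le_finrank

end Measure

/-! ### Upper bound: weight-zero monomials span the invariants -/

section Upper

/-- The linear eigenfunctions, indexed by weight `n` and a tag: `(n, true)` is `w_n` for `n ≥ 0`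
and the conjugate of `w_{-n}` for `n < 0`; `(0, false)` is the constant `1`; and `(n, false)`
is `0` for `n ≠ 0`. Thus each weight carries at most two nonzero functions. -/
noncomputable def L {K : ℕ} (t : ℤ × Bool) (x : Fin (2 * K + 1) → ℝ) : ℂ :=
  if t.2 then
    if 0 ≤ t.1 then w t.1.toNat x else (starRingEnd ℂ) (w (-t.1).toNat x)
  else if t.1 = 0 then 1 else 0

theorem L_actBand {K : ℕ} (t : ℤ × Bool) (u : ℝ) (x : Fin (2 * K + 1) → ℝ) :
    L t (actBand K u x) = Complex.exp (-(2 * Real.pi * t.1 * Complex.I) * u) * L t x := by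
  obtain ⟨n, b⟩ := t
  unfold L
  split_ifs with h1 h2 h3
  · simp only at h2 ⊢
    rw [w_actBand]
    have : ((n.toNat : ℕ) : ℂ) = (n : ℂ) := by
      have : ((n.toNat : ℕ) : ℤ) = n := Int.toNat_of_nonneg h2
      exact_mod_cast this
    push_cast
    rw [this]
    ring_nf
  · simp only at h2 ⊢
    rw [w_actBand, map_mul, ← Complex.exp_conj]
    have : (((-n).toNat : ℕ) : ℂ) = -(n : ℂ) := by
      have : (((-n).toNat : ℕ) : ℤ) = -n := Int.toNat_of_nonneg (by omega)
      exact_mod_cast this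
    simp only [map_mul, map_neg, Complex.conj_ofReal, Complex.conj_I]
    push_cast
    rw [this]
    ring_nf
  · simp only at h3
    simp [h3]
  · simp

theorem L_eq_zero {K : ℕ} (t : ℤ × Bool) (ht : t.1 ∉ Finset.Icc (-(K : ℤ)) K)
    (x : Fin (2 * K + 1) → ℝ) : L t x = 0 := by
  obtain ⟨n, b⟩ := t
  simp only [Finset.mem_Icc, not_and_or, not_le] at ht
  have hw : ∀ j : ℕ, K < j → w j x = 0 := by
    intro j hj
    rw [w, if_neg (by omega), dif_neg (by omega)]
  unfold L
  split_ifs with h1 h2 h3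
  · exact hw _ (by simp only at *; omega)
  · simp only
    rw [hw _ (by simp only at *; omega), map_zero]
  · simp only at h3; omega
  · rfl

/-- The complex span of the functions `L`; its `k`-th power, in the algebra of functions, contains
the polynomials of degree at most `k`. -/
noncomputable def spanL (K : ℕ) : Submodule ℂ ((Fin (2 * K + 1) → ℝ) → ℂ) :=
  Submodule.span ℂ (Set.range L)

theorem one_mem_spanL (K : ℕ) : (1 : (Fin (2 * K + 1) → ℝ) → ℂ) ∈ spanL K := by
  refine Submodule.subset_span ⟨(0, false), ?_⟩
  ext x
  simp [L]

theorem coord_mem_spanL {K : ℕ} (i : Fin (2 * K + 1)) :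
    (fun x => (x i : ℂ)) ∈ spanL K := by
  obtain ⟨i, hi⟩ := i
  by_cases h0 : i = 0
  · subst h0
    refine Submodule.subset_span ⟨(0, true), ?_⟩
    ext x
    simp [L, w]
  obtain ⟨j, hj0, hj⟩ : ∃ j, j ≠ 0 ∧ (i = 2 * j - 1 ∨ i = 2 * j) := ⟨(i + 1) / 2, by omega, by omega⟩
  have hjK : j ≤ K := by omega
  have m1 : L ((j : ℤ), true) ∈ spanL K := Submodule.subset_span ⟨_, rfl⟩
  have m2 : L (-(j : ℤ), true) ∈ spanL K := Submodule.subset_span ⟨_, rfl⟩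
  have h1 : ¬ (j : ℤ) ≤ 0 := by omega
  rcases hj with rfl | rfl
  · convert (spanL K).smul_mem (1 / 2 : ℂ) ((spanL K).add_mem m1 m2) using 1
    ext x
    simp [L, w, hj0, hjK]
    ring
  · convert (spanL K).smul_mem (-Complex.I / 2 : ℂ) ((spanL K).sub_mem m1 m2) using 1
    ext x
    simp [L, w, hj0, hjK]
    linear_combination (x ⟨2 * j, hi⟩ : ℂ) * Complex.I_sq

theorem poly_mem_spanL_pow {K k : ℕ} (p : MvPolynomial (Fin (2 * K + 1)) ℝ)
    (hp : p.totalDegree ≤ k) :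
    (fun x => ((MvPolynomial.eval x p : ℝ) : ℂ)) ∈ spanL K ^ k := by
  have h1 : (1 : Submodule ℂ ((Fin (2 * K + 1) → ℝ) → ℂ)) ≤ spanL K := by
    rw [Submodule.one_le]
    exact one_mem_spanL K
  have h2 : (fun x : Fin (2 * K + 1) → ℝ => ((MvPolynomial.eval x p : ℝ) : ℂ)) =
      ∑ e ∈ p.support, ((MvPolynomial.coeff (R := ℝ) e p : ℝ) : ℂ) •
        ∏ i, (fun x : Fin (2 * K + 1) → ℝ => (x i : ℂ)) ^ e i := by
    ext x
    simp [MvPolynomial.eval_eq']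
  rw [h2]
  refine Submodule.sum_mem _ fun e he => Submodule.smul_mem _ _ ?_
  have h3 : ∑ i, e i ≤ k := by
    have := MvPolynomial.le_totalDegree he
    rw [Finsupp.sum_fintype _ _ (fun _ => rfl)] at this
    omega
  refine pow_le_pow_right₀ h1 h3 ?_
  rw [← Finset.prod_pow_eq_pow_sum]
  have h4 : ∀ s : Finset (Fin (2 * K + 1)),
      ∏ i ∈ s, (fun x : Fin (2 * K + 1) → ℝ => (x i : ℂ)) ^ e i ∈ ∏ i ∈ s, spanL K ^ e i := by
    intro s
    induction s using Finset.induction_on with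
    | empty => simp
    | insert i s hi ih =>
      rw [Finset.prod_insert hi, Finset.prod_insert hi]
      exact Submodule.mul_mem_mul (Submodule.pow_mem_pow _ (coord_mem_spanL i) _) ih
  exact h4 _

theorem integral_char (n : ℤ) (hn : n ≠ 0) :
    ∫ u in (0 : ℝ)..1, Complex.exp (-(2 * Real.pi * n * Complex.I) * u) = 0 := by
  have hc : -(2 * Real.pi * n * Complex.I) ≠ 0 := by
    simp [hn, Real.pi_ne_zero]
  rw [integral_exp_mul_complex hc]
  have : Complex.exp (-(2 * Real.pi * n * Complex.I) * ((1 : ℝ) : ℂ)) = 1 := by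
    rw [Complex.exp_eq_one_iff]
    exact ⟨-n, by push_cast; ring⟩
  rw [this]
  simp

/-- The weight-zero products of `m + 1` of the functions `L`. Given `m` factors, the weight of the
remaining one is forced, and only its tag is free. -/
noncomputable def F {K m : ℕ}
    (t : (Fin m → Finset.Icc (-(K : ℤ)) K × Bool) × Bool) (x : Fin (2 * K + 1) → ℝ) : ℂ :=
  L (-∑ i, ((t.1 i).1 : ℤ), t.2) x * ∏ i, L (((t.1 i).1 : ℤ), (t.1 i).2) x

/-- Averaging a product of the functions `L` over the group gives the product itself if its
weight is zero, and zero otherwise; either way the result is in the span of the `F t`. -/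
theorem prod_avg {K m : ℕ} (v : Fin (m + 1) → ℤ × Bool) :
    (∀ x : Fin (2 * K + 1) → ℝ,
      IntervalIntegrable (fun u => ∏ i, L (v i) (actBand K u x)) volume 0 1) ∧
    (fun x : Fin (2 * K + 1) → ℝ => ∫ u in (0 : ℝ)..1, ∏ i, L (v i) (actBand K u x)) ∈
      Submodule.span ℂ (Set.range (F (K := K) (m := m))) := by
  have h1 : ∀ (x : Fin (2 * K + 1) → ℝ) (u : ℝ), ∏ i, L (v i) (actBand K u x) =
      Complex.exp (-(2 * Real.pi * ((∑ i, (v i).1 : ℤ) : ℂ) * Complex.I) * u)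
        * ∏ i, L (v i) x := by
    intro x u
    simp only [L_actBand, Finset.prod_mul_distrib, ← Complex.exp_sum]
    congr 2
    push_cast
    simp only [Finset.mul_sum, Finset.sum_mul, ← Finset.sum_neg_distrib]
  simp only [h1]
  refine ⟨fun x => Continuous.intervalIntegrable (by fun_prop) _ _, ?_⟩
  simp only [intervalIntegral.integral_mul_const]
  by_cases hs : ∑ i, (v i).1 = 0
  · by_cases hv : ∀ i, (v i).1 ∈ Finset.Icc (-(K : ℤ)) K
    · refine Submodule.subset_span ⟨(fun i => (⟨(v i.succ).1, hv _⟩, (v i.succ).2), (v 0).2), ?_⟩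
      ext x
      rw [Fin.sum_univ_succ] at hs
      have h0 : -∑ i : Fin m, (v i.succ).1 = (v 0).1 := by omega
      rw [Fin.sum_univ_succ, hs, Fin.prod_univ_succ]
      simp [F, h0]
    · push Not at hv
      obtain ⟨i, hi⟩ := hv
      convert Submodule.zero_mem _ using 1
      ext x
      rw [Finset.prod_eq_zero (Finset.mem_univ i) (L_eq_zero _ hi x), mul_zero]
      rfl
  · rw [integral_char _ hs]
    simp only [zero_mul]
    exact Submodule.zero_mem _

theorem avg_mem {K m : ℕ} (f : (Fin (2 * K + 1) → ℝ) → ℂ) (hf : f ∈ spanL K ^ (m + 1)) :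
    (∀ x : Fin (2 * K + 1) → ℝ,
      IntervalIntegrable (fun u => f (actBand K u x)) volume 0 1) ∧
    (fun x : Fin (2 * K + 1) → ℝ => ∫ u in (0 : ℝ)..1, f (actBand K u x)) ∈
      Submodule.span ℂ (Set.range (F (K := K) (m := m))) := by
  rw [spanL, Submodule.span_pow] at hf
  induction hf using Submodule.span_induction with
  | mem f hf =>
    rw [Set.mem_pow] at hf
    obtain ⟨g, rfl⟩ := hf
    choose v hv using fun i => (g i).2
    have := prod_avg (K := K) v
    simpa only [hv, List.prod_ofFn, Finset.prod_apply] using this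
  | zero =>
    refine ⟨fun x => by simp, ?_⟩
    convert Submodule.zero_mem (Submodule.span ℂ (Set.range (F (K := K) (m := m)))) using 1
    ext x
    simp
  | add f g _ _ hf hg =>
    refine ⟨fun x => (hf.1 x).add (hg.1 x), ?_⟩
    convert Submodule.add_mem _ hf.2 hg.2 using 1
    ext x
    exact intervalIntegral.integral_add (hf.1 x) (hg.1 x)
  | smul c f _ hf =>
    refine ⟨fun x => (hf.1 x).const_mul c, ?_⟩
    convert Submodule.smul_mem _ c hf.2 using 1
    ext x
    exact intervalIntegral.integral_const_mul c _

/-- On the sphere each `Y l` equals the group average of a polynomial, hence lies in the span of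
the weight-zero products; the `Y l` are independent, so `D` is at most the number of products. -/
theorem upper_bound {K m D : ℕ} {μ : Measure (Fin (2 * K + 1) → ℝ)}
    (hμ : IsUniformOnSphereI (Fin (2 * K + 1)) (Real.sqrt (2 * K + 1)) μ)
    {Y : Fin D → (Fin (2 * K + 1) → ℝ) → ℝ}
    (hY : IsONBofInvVk μ (Sph K) (actBand K) (m + 1) D Y) :
    D ≤ ((2 * K + 1) * 2) ^ m * 2 := by
  obtain ⟨hp, -, hon, hinv, -⟩ := hY
  choose p hpd hpe using hp
  let R : ((Fin (2 * K + 1) → ℝ) → ℂ) →ₗ[ℂ] (Sph K → ℂ) :=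
    LinearMap.funLeft ℂ ℂ Subtype.val
  let Z : Fin D → (Sph K → ℂ) := fun l x => (Y l x : ℂ)
  have hZmem : ∀ l, Z l ∈ Submodule.span ℂ (Set.range (R ∘ F (K := K) (m := m))) := by
    intro l
    rw [Set.range_comp, ← Submodule.map_span]
    refine ⟨_, (avg_mem _ (poly_mem_spanL_pow (p l) (hpd l))).2, ?_⟩
    ext ⟨x, hx⟩
    have : ∀ u, MvPolynomial.eval (actBand K u x) (p l) = Y l x := fun u => by
      rw [← hpe l _ (actBand_mem u hx), hinv l u x hx]
    simp [R, Z, LinearMap.funLeft_apply, this]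
  have hint : ∀ l m, Integrable (fun x => Y l x * Y m x) μ := by
    intro l m
    refine (integrable_of_continuous hμ
      (g := fun x => MvPolynomial.eval x (p l) * MvPolynomial.eval x (p m))
      (by exact (MvPolynomial.continuous_eval _).mul (MvPolynomial.continuous_eval _))).congr ?_
    filter_upwards [ae_mem_Sph hμ] with x hx
    rw [hpe l x hx, hpe m x hx]
  -- Real linear independence, by orthonormality; it passes to complex coefficients through
  -- real and imaginary parts.
  have hreal : ∀ c : Fin D → ℝ, (∀ x ∈ Sph K, ∑ l, c l * Y l x = 0) → ∀ l, c l = 0 := by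
    intro c hc l
    have h1 : ∫ x, ∑ j, c j * (Y j x * Y l x) ∂μ = 0 := by
      rw [integral_eq_zero_of_ae]
      filter_upwards [ae_mem_Sph hμ] with x hx
      simp only [← mul_assoc]
      rw [← Finset.sum_mul, hc x hx, zero_mul]
      rfl
    rw [integral_finsetSum _ (fun j _ => (hint j l).const_mul _)] at h1
    simpa [integral_const_mul, hon] using h1
  have hli : LinearIndependent ℂ Z := by
    rw [Fintype.linearIndependent_iff]
    intro c hc l
    have h0 : ∀ x (hx : x ∈ Sph K), ∑ j, c j * (Y j x : ℂ) = 0 := by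
      intro x hx
      simpa [Z] using congrFun hc ⟨x, hx⟩
    apply Complex.ext
    · refine hreal (fun j => (c j).re) (fun x hx => ?_) l
      simpa using congrArg Complex.re (h0 x hx)
    · refine hreal (fun j => (c j).im) (fun x hx => ?_) l
      simpa using congrArg Complex.im (h0 x hx)
  have : Fintype (Set.range (R ∘ F (K := K) (m := m))) := Fintype.ofFinite _
  have h := linearIndependent_le_span' Z hli (Set.range (R ∘ F (K := K) (m := m)))
    (by rintro _ ⟨l, rfl⟩; exact hZmem l)
  rw [Cardinal.mk_fin, ← Cardinal.mk_fintype] at h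
  have h2 := h.trans (Cardinal.mk_range_le (f := R ∘ F (K := K) (m := m)))
  rw [Cardinal.mk_fintype, Nat.cast_le] at h2
  refine h2.trans (le_of_eq ?_)
  have h3 : ((K : ℤ) + 1 + K).toNat = 2 * K + 1 := by omega
  simp [h3]

end Upper

/-! ### Lower bound: explicit invariant harmonic polynomials -/

section Lower

variable {K : ℕ}

/-- The rotation by `π` in the plane of frequency `s` (for `s = 0`, the reflection `z_1 ↦ -z_1`). -/
def planeFlip (K s : ℕ) : (Fin (2 * K + 1) → ℝ) →ₗ[ℝ] (Fin (2 * K + 1) → ℝ) :=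
  LinearMap.pi fun i =>
    (if (i.val + 1) / 2 = s then (-1 : ℝ) else 1) • LinearMap.proj i

theorem planeFlip_apply (s : ℕ) (x : Fin (2 * K + 1) → ℝ) (i : Fin (2 * K + 1)) :
    planeFlip K s x i = (if (i.val + 1) / 2 = s then (-1 : ℝ) else 1) * x i := rfl

theorem planeFlip_orth (s : ℕ) (x y : Fin (2 * K + 1) → ℝ) :
    ∑ i, planeFlip K s x i * planeFlip K s y i = ∑ i, x i * y i := by
  refine Finset.sum_congr rfl fun i _ => ?_
  rw [planeFlip_apply, planeFlip_apply]
  split_ifs <;> ring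

theorem w_planeFlip (j s : ℕ) (x : Fin (2 * K + 1) → ℝ) :
    w j (planeFlip K s x) = (if j = s then -1 else 1) * w j x := by
  unfold w
  split_ifs with h0 h1 h2 h3 h4 <;> try simp only [planeFlip_apply]
  · subst h0 h1; simp
  · subst h0; simp [h1]
  · have e1 : (2 * j - 1 + 1) / 2 = s := by omega
    have e2 : (2 * j + 1) / 2 = s := by omega
    simp [e1, e2]; ring
  · have e1 : (2 * j - 1 + 1) / 2 ≠ s := by omega
    have e2 : (2 * j + 1) / 2 ≠ s := by omega
    simp [e1, e2]
  all_goals simp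

/-- A function that is odd under the flips of `card S` different planes is orthogonal to all
polynomials of degree less than `card S`: a monomial of such a degree misses one of the planes,
so flipping that plane changes the sign of the product. -/
theorem orth_of_flip {μ : Measure (Fin (2 * K + 1) → ℝ)}
    (hμ : IsUniformOnSphereI (Fin (2 * K + 1)) (Real.sqrt (2 * K + 1)) μ)
    {f : (Fin (2 * K + 1) → ℝ) → ℝ} (hf : Continuous f) (S : Finset ℕ)
    (hS : ∀ s ∈ S, ∀ x, f (planeFlip K s x) = - f x)
    (q : MvPolynomial (Fin (2 * K + 1)) ℝ) (hq : q.totalDegree < S.card) :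
    ∫ x, f x * MvPolynomial.eval x q ∂μ = 0 := by
  refine integral_mul_poly_eq_zero hμ hf (fun e he => ?_) q hq
  obtain ⟨s, hs, hse⟩ : ∃ s ∈ S, ∀ i : Fin (2 * K + 1), (i.val + 1) / 2 = s → e i = 0 := by
    by_contra! hcon
    have h1 : S ⊆ e.support.image (fun i : Fin (2 * K + 1) => (i.val + 1) / 2) := by
      intro s hs
      obtain ⟨i, h1, h2⟩ := hcon s hs
      exact Finset.mem_image.mpr ⟨i, Finsupp.mem_support_iff.mpr h2, h1⟩
    have h2 := (Finset.card_le_card h1).trans Finset.card_image_le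
    have h3 : e.support.card ≤ ∑ i, e i := by
      rw [Finset.card_eq_sum_ones]
      refine (Finset.sum_le_sum fun i hi => ?_).trans
        (Finset.sum_le_sum_of_subset (Finset.subset_univ e.support))
      exact Nat.one_le_iff_ne_zero.mpr (Finsupp.mem_support_iff.mp hi)
    omega
  refine integral_eq_zero_of_odd hμ (planeFlip K s) (planeFlip_orth s) (by fun_prop) fun x => ?_
  have h1 : ∏ i, planeFlip K s x i ^ e i = ∏ i, x i ^ e i := by
    refine Finset.prod_congr rfl fun i _ => ?_
    by_cases hi : (i.val + 1) / 2 = s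
    · rw [hse i hi, pow_zero, pow_zero]
    · rw [planeFlip_apply, if_neg hi, one_mul]
  rw [hS s hs, h1, neg_mul]

/-- The point of the sphere with equal nonnegative coordinates on `T` and zeros elsewhere. -/
noncomputable def pt (T : Finset (Fin (2 * K + 1))) : Fin (2 * K + 1) → ℝ :=
  fun i => if i ∈ T then Real.sqrt (((2 * K + 1 : ℕ) : ℝ) / T.card) else 0

theorem pt_mem {T : Finset (Fin (2 * K + 1))} (hT : T.Nonempty) : pt T ∈ Sph K := by
  have h : (T.card : ℝ) ≠ 0 := by exact_mod_cast hT.card_pos.ne'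
  simp only [Sph, Set.mem_ofPred_eq, pt]
  simp only [ite_pow, Real.sq_sqrt (show (0 : ℝ) ≤ ((2 * K + 1 : ℕ) : ℝ) / T.card by positivity)]
  simp
  field_simp

/-- The real axes `z_{2s}` (1-based; `z_1` for `s = 0`) of the planes with frequency in `S`. In the
0-based indexing this is the index `2 * s - 1`, truncated subtraction giving `0` for `s = 0`. -/
def axes (K : ℕ) (S : Finset ℕ) : Finset (Fin (2 * K + 1)) :=
  Finset.univ.filter fun i => ∃ s ∈ S, i.val = 2 * s - 1

theorem w_pt_of_mem {S : Finset ℕ} {j : ℕ} (hj : j ∈ S) (hjK : j ≤ K) :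
    ∃ r : ℝ, r ≠ 0 ∧ w j (pt (axes K S)) = r := by
  have hm : (⟨2 * j - 1, by omega⟩ : Fin (2 * K + 1)) ∈ axes K S := by
    simp only [axes, Finset.mem_filter, Finset.mem_univ, true_and]
    exact ⟨j, hj, rfl⟩
  have hpos : (0 : ℝ) < (axes K S).card := by exact_mod_cast Finset.card_pos.mpr ⟨_, hm⟩
  refine ⟨Real.sqrt (((2 * K + 1 : ℕ) : ℝ) / (axes K S).card), by positivity, ?_⟩
  unfold w
  split_ifs with h0
  · subst h0
    simp only [pt]
    rw [if_pos hm]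
  · have h2 : (⟨2 * j, by omega⟩ : Fin (2 * K + 1)) ∉ axes K S := by
      simp only [axes, Finset.mem_filter, Finset.mem_univ, true_and]
      rintro ⟨s, -, hs⟩
      omega
    simp only [pt]
    rw [if_pos hm, if_neg h2]
    simp

theorem w_pt_of_notMem {S : Finset ℕ} {j : ℕ} (hj : j ∉ S) :
    w j (pt (axes K S)) = 0 := by
  unfold w
  split_ifs with h0 h
  · subst h0
    have h1 : (⟨0, by omega⟩ : Fin (2 * K + 1)) ∉ axes K S := by
      simp only [axes, Finset.mem_filter, Finset.mem_univ, true_and]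
      rintro ⟨s, hs, h⟩
      have : s = 0 := by omega
      exact hj (this ▸ hs)
    simp only [pt]
    rw [if_neg h1]
    simp
  · have h1 : (⟨2 * j - 1, by omega⟩ : Fin (2 * K + 1)) ∉ axes K S := by
      simp only [axes, Finset.mem_filter, Finset.mem_univ, true_and]
      rintro ⟨s, hs, h⟩
      have : s = j := by omega
      exact hj (this ▸ hs)
    have h2 : (⟨2 * j, by omega⟩ : Fin (2 * K + 1)) ∉ axes K S := by
      simp only [axes, Finset.mem_filter, Finset.mem_univ, true_and]
      rintro ⟨s, -, hs⟩
      omega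
    simp only [pt]
    rw [if_neg h1, if_neg h2]
    simp
  · rfl

/-- The real part of `w_{a_1} ⋯ w_{a_m} · conj w_b` with `b = a_1 + ⋯ + a_m`, so that the weight
of the product is zero. -/
noncomputable def Q {m : ℕ} (a : Fin m → ℕ) (x : Fin (2 * K + 1) → ℝ) : ℝ :=
  ((∏ i, w (a i) x) * (starRingEnd ℂ) (w (∑ i, a i) x)).re

theorem continuous_Q {m : ℕ} (a : Fin m → ℕ) : Continuous (Q (K := K) a) := by
  have := fun j => continuous_w (K := K) j
  unfold Q
  fun_prop

theorem w_poly (j : ℕ) : ∃ p q : MvPolynomial (Fin (2 * K + 1)) ℝ,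
    p.totalDegree ≤ 1 ∧ q.totalDegree ≤ 1 ∧
    ∀ x, w j x = (MvPolynomial.eval x p : ℝ) + (MvPolynomial.eval x q : ℝ) * Complex.I := by
  unfold w
  split_ifs with h0 h
  · exact ⟨MvPolynomial.X ⟨0, by omega⟩, 0, (MvPolynomial.totalDegree_X _).le, by simp, fun x => by simp⟩
  · exact ⟨MvPolynomial.X ⟨2 * j - 1, by omega⟩, MvPolynomial.X ⟨2 * j, by omega⟩,
      (MvPolynomial.totalDegree_X _).le, (MvPolynomial.totalDegree_X _).le, fun x => by simp⟩
  · exact ⟨0, 0, by simp, by simp, fun x => by simp⟩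

theorem prod_w_poly {ι : Type} (s : Finset ι) (a : ι → ℕ) :
    ∃ p q : MvPolynomial (Fin (2 * K + 1)) ℝ,
    p.totalDegree ≤ s.card ∧ q.totalDegree ≤ s.card ∧
    ∀ x, ∏ i ∈ s, w (a i) x =
      (MvPolynomial.eval x p : ℝ) + (MvPolynomial.eval x q : ℝ) * Complex.I := by
  classical
  induction s using Finset.induction_on with
  | empty => exact ⟨1, 0, by simp, by simp, fun x => by simp⟩
  | insert i s hi ih =>
    obtain ⟨p, q, hp, hq, h⟩ := ih
    obtain ⟨p', q', hp', hq', h'⟩ := w_poly (K := K) (a i)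
    rw [Finset.card_insert_of_notMem hi]
    refine ⟨p' * p - q' * q, p' * q + q' * p, ?_, ?_, fun x => ?_⟩
    · refine (MvPolynomial.totalDegree_sub _ _).trans (max_le ?_ ?_) <;>
      exact (MvPolynomial.totalDegree_mul _ _).trans (by omega)
    · refine (MvPolynomial.totalDegree_add _ _).trans (max_le ?_ ?_) <;>
      exact (MvPolynomial.totalDegree_mul _ _).trans (by omega)
    · rw [Finset.prod_insert hi, h, h']
      simp only [map_sub, map_add, map_mul]
      push_cast
      linear_combination ((MvPolynomial.eval x q' : ℝ) : ℂ) * (MvPolynomial.eval x q : ℝ) *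
        Complex.I_sq

theorem Q_poly {m : ℕ} (a : Fin m → ℕ) : ∃ p : MvPolynomial (Fin (2 * K + 1)) ℝ,
    p.totalDegree ≤ m + 1 ∧ ∀ x, Q a x = MvPolynomial.eval x p := by
  obtain ⟨p, q, hp, hq, h⟩ := prod_w_poly (K := K) Finset.univ a
  obtain ⟨p', q', hp', hq', h'⟩ := w_poly (K := K) (∑ i, a i)
  rw [Finset.card_fin] at hp hq
  refine ⟨p * p' + q * q', ?_, fun x => ?_⟩
  · refine (MvPolynomial.totalDegree_add _ _).trans (max_le ?_ ?_) <;>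
      exact (MvPolynomial.totalDegree_mul _ _).trans (by omega)
  · rw [Q, h, h']
    simp

theorem Q_actBand {m : ℕ} (a : Fin m → ℕ) (u : ℝ) (x : Fin (2 * K + 1) → ℝ) :
    Q a (actBand K u x) = Q a x := by
  unfold Q
  congr 1
  simp only [w_actBand, Finset.prod_mul_distrib, ← Complex.exp_sum, map_mul, ← Complex.exp_conj]
  rw [mul_mul_mul_comm, ← Complex.exp_add]
  convert one_mul _ using 2
  rw [Complex.exp_eq_one_iff]
  refine ⟨0, ?_⟩
  simp only [map_neg, Complex.conj_ofReal, Complex.conj_I]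
  push_cast
  simp only [Finset.mul_sum, Finset.sum_mul, neg_mul, mul_neg, neg_neg, Finset.sum_neg_distrib]
  simp

/-- The frequencies occurring in `Q a`. -/
def freqs {m : ℕ} (a : Fin m → ℕ) : Finset ℕ := insert (∑ i, a i) (Finset.univ.image a)

theorem card_freqs {m : ℕ} {a : Fin m → ℕ} (ha : Function.Injective a)
    (hb : ∀ i, a i ≠ ∑ i, a i) : (freqs a).card = m + 1 := by
  rw [freqs, Finset.card_insert_of_notMem (by simpa using hb),
    Finset.card_image_of_injective _ ha, Finset.card_fin]

theorem Q_flip {m : ℕ} {a : Fin m → ℕ} (ha : Function.Injective a)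
    (hb : ∀ i, a i ≠ ∑ i, a i) {s : ℕ} (hs : s ∈ freqs a) (x : Fin (2 * K + 1) → ℝ) :
    Q a (planeFlip K s x) = - Q a x := by
  unfold Q
  simp only [w_planeFlip, Finset.prod_mul_distrib]
  rw [freqs, Finset.mem_insert, Finset.mem_image] at hs
  rcases hs with rfl | ⟨i, -, rfl⟩
  · simp [hb]
  · rw [if_neg (hb i).symm]
    simp [ha.eq_iff]

/-- For `m + 1 ≠ 2`, the polynomials `Q a`, with `a_i` in consecutive disjoint blocks of length
`M` inside `[mM, 2mM)`, are dual to points of the sphere. The sum `b` is at least `2mM` for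
`m ≥ 2`, so it lies outside the blocks; for `m = 0` there is the single polynomial `z_1`. For
`m = 1` the frequencies `a_1` and `b` coincide and the flip argument breaks down. -/
theorem lower_bound {m M K D : ℕ} {μ : Measure (Fin (2 * K + 1) → ℝ)}
    (hμ : IsUniformOnSphereI (Fin (2 * K + 1)) (Real.sqrt (2 * K + 1)) μ)
    {Y : Fin D → (Fin (2 * K + 1) → ℝ) → ℝ}
    (hY : IsONBofInvVk μ (Sph K) (actBand K) (m + 1) D Y) (hm : m ≠ 1)
    (hM : 2 * (m + 1) ^ 2 * M ≤ K) :
    M ^ m ≤ D := by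
  let a : (Fin m → Fin M) → Fin m → ℕ := fun t i => (m + i) * M + t i
  have hlo : ∀ t i, m * M ≤ a t i := fun t i => by
    have : (m + i) * M = m * M + i * M := by ring
    simp only [a]; omega
  have hhi : ∀ t i, a t i < 2 * (m * M) := fun t i => by
    have h1 : (m + i.val + 1) * M ≤ (2 * m) * M := Nat.mul_le_mul_right _ (by omega)
    have h2 := (t i).2
    simp only [a]; nlinarith
  have hsep : ∀ t t' i j, a t i = a t' j → i = j ∧ t i = t' j := by
    intro t t' i j h
    have h1 := (t i).2
    have h2 := (t' j).2
    simp only [a] at h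
    have h3 : i = j := by
      rcases lt_trichotomy i j with hij | hij | hij
      · have : (m + i.val + 1) * M ≤ (m + j) * M := Nat.mul_le_mul_right _ (by omega)
        nlinarith
      · exact hij
      · have : (m + j.val + 1) * M ≤ (m + i) * M := Nat.mul_le_mul_right _ (by omega)
        nlinarith
    subst h3
    exact ⟨rfl, Fin.ext (by omega)⟩
  have hinj : ∀ t, Function.Injective (a t) := fun t i j h => (hsep t t i j h).1
  have hb : ∀ t t' i, a t i ≠ ∑ j, a t' j := by
    intro t t' i
    have h0 : 2 ≤ m := by have := i.pos; omega
    have h1 : m * (m * M) ≤ ∑ j, a t' j := by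
      simpa using Finset.card_nsmul_le_sum Finset.univ (a t') (m * M) (fun j _ => hlo t' j)
    have h2 := hhi t i
    have h3 : 2 * (m * M) ≤ m * (m * M) := Nat.mul_le_mul_right _ h0
    omega
  have hsumK : ∀ t, ∑ j, a t j ≤ K := by
    intro t
    have h1 : ∑ j, a t j ≤ m * (2 * (m * M)) := by
      simpa using Finset.sum_le_card_nsmul Finset.univ (a t) _ (fun j _ => (hhi t j).le)
    nlinarith
  have haK : ∀ t i, a t i ≤ K := fun t i =>
    (Finset.single_le_sum (f := a t) (fun _ _ => Nat.zero_le _) (Finset.mem_univ i)).trans (hsumK t)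
  have key := card_le_of_dual hY (ι := Fin m → Fin M) (fun t => Q (a t))
    (fun t => pt (axes K (freqs (a t)))) ?_ ?_ ?_ (fun t => Q_poly _)
    (fun t u x => Q_actBand _ u x)
    (fun t q hq => orth_of_flip hμ (continuous_Q _) (freqs (a t))
      (fun s hs x => Q_flip (hinj t) (hb t t) hs x) q
      (by rw [card_freqs (hinj t) (hb t t)]; exact hq))
  · simpa using key
  · intro t
    refine pt_mem ⟨⟨2 * (∑ j, a t j) - 1, by have := hsumK t; omega⟩, ?_⟩
    simp only [axes, Finset.mem_filter, Finset.mem_univ, true_and]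
    exact ⟨_, Finset.mem_insert_self _ _, rfl⟩
  · intro t
    have h1 : ∀ i, ∃ r : ℝ, r ≠ 0 ∧ w (a t i) (pt (axes K (freqs (a t)))) = r := fun i =>
      w_pt_of_mem (Finset.mem_insert_of_mem (Finset.mem_image_of_mem _ (Finset.mem_univ i)))
        (haK t i)
    choose r hr0 hr using h1
    obtain ⟨r', hr0', hr'⟩ := w_pt_of_mem (Finset.mem_insert_self (∑ i, a t i)
      (Finset.univ.image (a t))) (hsumK t)
    have hr'' : w (∑ i, a t i) (pt (axes K (freqs (a t)))) = r' := hr'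
    simp only [Q, hr, hr'', Complex.conj_ofReal, ← Complex.ofReal_prod, ← Complex.ofReal_mul,
      Complex.ofReal_re]
    exact mul_ne_zero (Finset.prod_ne_zero_iff.mpr fun i _ => hr0 i) hr0'
  · intro t t' htt
    obtain ⟨i, hi⟩ := Function.ne_iff.mp htt
    have h1 : a t i ∉ freqs (a t') := by
      rw [freqs, Finset.mem_insert, Finset.mem_image]
      rintro (h | ⟨j, -, h⟩)
      · exact hb t t' i h
      · obtain ⟨rfl, h2⟩ := hsep _ _ _ _ h
        exact hi h2.symm
    simp only [Q]
    rw [Finset.prod_eq_zero (Finset.mem_univ i) (w_pt_of_notMem h1)]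
    simp

/-- The exchange of two coordinates. -/
def swapMap (i j : Fin (2 * K + 1)) : (Fin (2 * K + 1) → ℝ) →ₗ[ℝ] (Fin (2 * K + 1) → ℝ) :=
  LinearMap.funLeft ℝ ℝ (Equiv.swap i j)

/-- In degree two the functions `|w_a|² - 2 z_1²`, `1 ≤ a ≤ K`, lie in `V_2`. -/
theorem lower_bound_two {K D : ℕ} {μ : Measure (Fin (2 * K + 1) → ℝ)}
    (hμ : IsUniformOnSphereI (Fin (2 * K + 1)) (Real.sqrt (2 * K + 1)) μ)
    {Y : Fin D → (Fin (2 * K + 1) → ℝ) → ℝ}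
    (hY : IsONBofInvVk μ (Sph K) (actBand K) 2 D Y) :
    K ≤ D := by
  have hsq : ∀ i : Fin (2 * K + 1), ∫ x, x i ^ 2 ∂μ = ∫ x, x ⟨0, by omega⟩ ^ 2 ∂μ := by
    intro i
    have := integral_comp hμ (swapMap i ⟨0, by omega⟩)
      (fun x y => Equiv.sum_comp (Equiv.swap i ⟨0, by omega⟩) (fun i => x i * y i))
      (g := fun x => x ⟨0, by omega⟩ ^ 2) (by fun_prop)
    simpa [swapMap, LinearMap.funLeft_apply] using this
  let f : Fin K → (Fin (2 * K + 1) → ℝ) → ℝ := fun a x =>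
    x ⟨2 * a + 1, by omega⟩ ^ 2 + x ⟨2 * a + 2, by omega⟩ ^ 2 - 2 * x ⟨0, by omega⟩ ^ 2
  have hf : ∀ a x, f a x = Complex.normSq (w (a + 1) x) - 2 * Complex.normSq (w 0 x) := by
    intro a x
    have h3 : a.val + 1 ≤ K := a.2
    simp only [f, w, h3, Nat.add_eq_zero_iff, one_ne_zero, and_false, if_false, if_true, dite_true,
      Complex.normSq_add_mul_I, Complex.normSq_ofReal, mul_add, mul_one, ← pow_two]
    rfl
  have hfc : ∀ a, Continuous (f a) := fun a => by fun_prop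
  have key := card_le_of_dual hY (ι := Fin K) f (fun a => pt (axes K {a.val + 1}))
    ?_ ?_ ?_ ?_ ?_ ?_
  · simpa using key
  · intro a
    refine pt_mem ⟨⟨2 * a + 1, by omega⟩, ?_⟩
    simp only [axes, Finset.mem_filter, Finset.mem_univ, true_and]
    exact ⟨_, Finset.mem_singleton_self _, rfl⟩
  · intro a
    obtain ⟨r, hr0, hr⟩ := w_pt_of_mem (K := K) (Finset.mem_singleton_self (a.val + 1)) a.2
    rw [hf, hr, w_pt_of_notMem (by simp)]
    simpa using hr0
  · intro a b hab
    have h1 : a.val + 1 ∉ ({b.val + 1} : Finset ℕ) := by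
      simpa [Fin.ext_iff] using hab
    rw [hf, w_pt_of_notMem h1, w_pt_of_notMem (by simp)]
    simp
  · intro a
    refine ⟨MvPolynomial.X ⟨2 * a + 1, by omega⟩ ^ 2 + MvPolynomial.X ⟨2 * a + 2, by omega⟩ ^ 2
      - MvPolynomial.C 2 * MvPolynomial.X ⟨0, by omega⟩ ^ 2, ?_, fun x => by simp [f]⟩
    refine (MvPolynomial.totalDegree_sub _ _).trans (max_le ?_ ?_)
    · refine (MvPolynomial.totalDegree_add _ _).trans (max_le ?_ ?_) <;>
      exact (MvPolynomial.totalDegree_pow _ _).trans (by simp)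
    · refine (MvPolynomial.totalDegree_mul _ _).trans ?_
      simp
  · intro a u x
    have h : ∀ j, Complex.normSq (w j (actBand K u x)) = Complex.normSq (w j x) := by
      intro j
      rw [w_actBand, map_mul, ← Complex.ofReal_neg, Complex.normSq_eq_norm_sq (Complex.exp _),
        Complex.norm_exp_ofReal_mul_I]
      simp
    rw [hf, hf, h, h]
  · intro a q hq
    refine integral_mul_poly_eq_zero hμ (hfc a) (fun e he => ?_) q hq
    -- Linear monomials are odd under `-1`; the constant is handled by the exchange symmetry.
    rcases Nat.lt_or_ge 0 (∑ i, e i) with h1 | h1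
    · refine integral_eq_zero_of_odd hμ (-LinearMap.id) (by simp)
        (by have := hfc a; fun_prop) fun x => ?_
      have h2 : ∑ i, e i = 1 := by omega
      have h3 : ∏ i, (-x i) ^ e i = - ∏ i, x i ^ e i := by
        have : ∀ i, (-x i) ^ e i = (-1) ^ e i * x i ^ e i := fun i => neg_pow _ _
        simp only [this, Finset.prod_mul_distrib, Finset.prod_pow_eq_pow_sum, h2]
        ring
      simp only [LinearMap.neg_apply, LinearMap.id_apply, Pi.neg_apply, h3, f]
      ring
    · have h2 : ∀ i, e i = 0 := by
        intro i
        have := Finset.single_le_sum (f := e) (fun _ _ => Nat.zero_le _) (Finset.mem_univ i)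
        omega
      simp only [h2, pow_zero, Finset.prod_const_one, mul_one, f]
      have hi : ∀ i : Fin (2 * K + 1), Integrable (fun x : Fin (2 * K + 1) → ℝ => x i ^ 2) μ :=
        fun i => integrable_of_continuous hμ (by fun_prop)
      rw [integral_sub (by exact (hi _).add (hi _)) ((hi _).const_mul _),
        integral_add (hi _) (hi _), integral_const_mul, hsq, hsq ⟨2 * a + 2, _⟩]
      ring

end Lower

end BandLimited

/-- **Dimension counting for the band-limited translation group:
`dim V_{d,k}(Sft_d) = Θ(d^{k-1})` on the sphere `S^{d-1}(√d)`, `d = 2K+1` odd.**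
The dimension is expressed as the cardinality `D` of any orthonormal basis of
`V_{d,k}(Sft_d)`. -/
theorem degeneracy_band_limited (k : ℕ) (hk : 1 ≤ k) :
    ∃ c C : ℝ, 0 < c ∧ c ≤ C ∧ ∃ d₀ : ℕ,
      ∀ K : ℕ, d₀ ≤ 2 * K + 1 →
        ∀ μ : Measure (Fin (2 * K + 1) → ℝ),
          IsUniformOnSphereI (Fin (2 * K + 1)) (Real.sqrt (2 * K + 1)) μ →
          ∀ (D : ℕ) (Ybar : Fin D → (Fin (2 * K + 1) → ℝ) → ℝ),
            IsONBofInvVk μ {x | ∑ i, x i ^ 2 = ((2 * K + 1 : ℕ) : ℝ)} (actBand K)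
              k D Ybar →
            c * ((2 * K + 1 : ℕ) : ℝ) ^ (k - 1) ≤ D ∧
              (D : ℝ) ≤ C * ((2 * K + 1 : ℕ) : ℝ) ^ (k - 1) := by
  obtain ⟨m, rfl⟩ : ∃ m, k = m + 1 := ⟨k - 1, by omega⟩
  rw [Nat.add_sub_cancel]
  have hq : (1 : ℝ) ≤ 12 * ((m : ℝ) + 1) ^ 2 := by nlinarith [(Nat.cast_nonneg m : (0 : ℝ) ≤ m)]
  refine ⟨(1 / (12 * ((m : ℝ) + 1) ^ 2)) ^ m, 2 ^ m * 2, by positivity, ?_,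
    4 * (m + 1) ^ 2 + 1, ?_⟩
  · have h1 : (1 / (12 * ((m : ℝ) + 1) ^ 2)) ^ m ≤ 1 :=
      pow_le_one₀ (by positivity) (by rw [div_le_one (by positivity)]; exact hq)
    have h2 : (1 : ℝ) ≤ 2 ^ m := one_le_pow₀ (by norm_num)
    linarith
  intro K hK μ hμ D Y hY
  constructor
  -- `M` is the block length of the lower bound, of order `K`; the second inequality needs
  -- `M ≥ 1`, that is `K ≥ 2 (m + 1) ^ 2`, which is where `d₀` comes from.
  · obtain ⟨M, hM1, hM2⟩ : ∃ M : ℕ, 2 * (m + 1) ^ 2 * M ≤ K ∧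
        2 * K + 1 ≤ 12 * (m + 1) ^ 2 * M := by
      have hpos : 0 < 2 * (m + 1) ^ 2 := by positivity
      refine ⟨K / (2 * (m + 1) ^ 2), Nat.mul_div_le _ _, ?_⟩
      have h1 := Nat.lt_mul_div_succ K hpos
      have h2 : 1 ≤ K / (2 * (m + 1) ^ 2) := (Nat.one_le_div_iff hpos).mpr (by omega)
      nlinarith
    have hMD : M ^ m ≤ D := by
      by_cases hm : m = 1
      · subst hm
        have := BandLimited.lower_bound_two hμ hY
        rw [pow_one]
        omega
      · exact BandLimited.lower_bound hμ hY hm hM1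
    have h1 : 1 / (12 * ((m : ℝ) + 1) ^ 2) * ((2 * K + 1 : ℕ) : ℝ) ≤ M := by
      rw [one_div_mul_eq_div, div_le_iff₀ (by positivity), mul_comm (M : ℝ)]
      exact_mod_cast hM2
    rw [← mul_pow]
    calc _ ≤ (M : ℝ) ^ m := pow_le_pow_left₀ (by positivity) h1 m
      _ ≤ D := by exact_mod_cast hMD
  · have h := BandLimited.upper_bound hμ hY
    calc (D : ℝ) ≤ (((2 * K + 1) * 2) ^ m * 2 : ℕ) := by exact_mod_cast h
      _ = _ := by push_cast; rw [mul_pow]; ring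
end
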